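/- arXiv:1103.3088 — 2 statements merged into one kernel-verified Lean document; each statement's English description precedes it below -/
import Mathlib

section
/- Let d ≥ 2 and let V := ∫_{S^d} ∫_{S^d} |x − y| dσ_d(x) dσ_d(y). Suppose there is a constant c > 0 such that the maximal sum of distances satisfies E_{−1}(S^d; N) := sup { ∑_{j≠k} |x_j − x_k| : x_1,…,x_N ∈ S^d } = V·N² − c·N^{1−1/d} + o(N^{1−1/d}) as N → ∞. Then the optimal spherical cap L2-discrepancy satisfies N^{1/2 + 1/(2d)} · D_{L2,C}(S^d; N) → sqrt( c · H_d(B^d)/H_d(S^d) ) as N → ∞. -/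
open MeasureTheory Metric Real Filter
open scoped BigOperators ENNReal NNReal RealInnerProductSpace Topology

noncomputable section

/-- Normalized uniform (surface) probability measure `σ_d` on the unit sphere
`S^d ⊂ ℝ^{d+1}`, defined as normalized `d`-dimensional Hausdorff measure. -/
def sigmaMeasure (d : ℕ) : Measure (EuclideanSpace ℝ (Fin (d + 1))) :=
  (μH[(d : ℝ)] (sphere (0 : EuclideanSpace ℝ (Fin (d + 1))) 1))⁻¹ •
    μH[(d : ℝ)].restrict (sphere (0 : EuclideanSpace ℝ (Fin (d + 1))) 1)

/-- Squared spherical cap `L²` discrepancy of the `N`-point configuration `x` on `S^d`: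
`∫_{-1}^{1} ∫_{S^d} |#{k : x_k ∈ C(y;t)}/N − σ_d(C(y;t))|² dσ_d(y) dt`. -/
def L2DiscSq (d N : ℕ) (x : Fin N → EuclideanSpace ℝ (Fin (d + 1))) : ℝ :=
  ∫ t in Set.Icc (-1 : ℝ) 1, ∫ y,
    ((Nat.card {k : Fin N // t ≤ ⟪y, x k⟫} : ℝ) / N
      - (sigmaMeasure d {z | t ≤ ⟪y, z⟫}).toReal) ^ 2 ∂ sigmaMeasure d

/-- Spherical cap `L²` discrepancy. -/
def L2Disc (d N : ℕ) (x : Fin N → EuclideanSpace ℝ (Fin (d + 1))) : ℝ :=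
  Real.sqrt (L2DiscSq d N x)

/-- Optimal (infimal) spherical cap `L²`-discrepancy over all `N`-point configurations
on `S^d`. -/
def optL2Disc (d N : ℕ) : ℝ :=
  ⨅ x : {x : Fin N → EuclideanSpace ℝ (Fin (d + 1)) //
    ∀ k, x k ∈ sphere (0 : EuclideanSpace ℝ (Fin (d + 1))) 1}, L2Disc d N x.1

/-- The maximal sum of distances `E_{−1}(S^d; N) = sup { ∑_{j≠k} |x_j − x_k| }` over all
`N`-point configurations on `S^d`. -/
def maxSumDist (d N : ℕ) : ℝ :=
  ⨆ x : {x : Fin N → EuclideanSpace ℝ (Fin (d + 1)) //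
    ∀ k, x k ∈ sphere (0 : EuclideanSpace ℝ (Fin (d + 1))) 1},
    ∑ j, ∑ k, if j ≠ k then dist (x.1 j) (x.1 k) else 0


/-- Spherical cap in `ℝ × ℝ^d`. -/
abbrev PF (d : ℕ) := WithLp 2 (ℝ × EuclideanSpace ℝ (Fin d))

def capF (d : ℕ) (c : ℝ) : Set (PF d) := {y | ‖y‖ = 1 ∧ c ≤ y.fst}

lemma PF_norm_sq (d : ℕ) (y : PF d) : ‖y‖ ^ 2 = y.fst ^ 2 + ‖y.snd‖ ^ 2 := by
  rw [WithLp.prod_norm_sq_eq_of_L2]; simp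

lemma hausdorff_closedBall_smul (d : ℕ) (s : ℝ) (hs : 0 < s) :
    μH[(d : ℝ)] (closedBall (0 : EuclideanSpace ℝ (Fin d)) s) =
      ENNReal.ofReal (s ^ d) * μH[(d : ℝ)] (closedBall (0 : EuclideanSpace ℝ (Fin d)) 1) := by
  have := Measure.hausdorffMeasure_smul₀ (d := (d : ℝ)) (by positivity) hs.ne'
    (closedBall (0 : EuclideanSpace ℝ (Fin d)) 1)
  rw [smul_unitClosedBall_of_nonneg hs.le] at this
  rw [this, ENNReal.smul_def, smul_eq_mul]
  congr 1
  rw [NNReal.rpow_natCast, ENNReal.ofReal_pow hs.le, ENNReal.coe_pow]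
  congr 1
  exact Real.enorm_of_nonneg hs.le

lemma capF_hausdorff_lower (d : ℕ) (c : ℝ) (hc : 0 < c) (hc1 : c < 1) :
    ENNReal.ofReal (√(1 - c ^ 2) ^ d) * μH[(d : ℝ)] (closedBall (0 : EuclideanSpace ℝ (Fin d)) 1)
      ≤ μH[(d : ℝ)] (capF d c) := by
  have hs : 0 < 1 - c ^ 2 := by nlinarith
  rw [← hausdorff_closedBall_smul d _ (Real.sqrt_pos.2 hs)]
  have hl : LipschitzWith 1 (fun y : PF d => y.snd) := by
    apply LipschitzWith.of_dist_le_mul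
    intro x y
    rw [dist_eq_norm, dist_eq_norm, NNReal.coe_one, one_mul]
    have := PF_norm_sq d (x - y)
    rw [← WithLp.sub_snd]
    exact abs_le_of_sq_le_sq' (by nlinarith [sq_nonneg (x - y).fst]) (norm_nonneg _) |>.2
  have h2 := hl.hausdorffMeasure_image_le (d := (d : ℝ)) (by positivity) (capF d c)
  simp only [ENNReal.coe_one, ENNReal.one_rpow, one_mul] at h2
  refine le_trans (measure_mono ?_) h2
  intro u hu
  rw [mem_closedBall_zero_iff] at hu
  have hu2 : ‖u‖ ^ 2 ≤ 1 - c ^ 2 := by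
    rw [← Real.sq_sqrt hs.le]; gcongr
  refine ⟨WithLp.toLp 2 (√(1 - ‖u‖ ^ 2), u), ⟨?_, ?_⟩, rfl⟩
  · have := PF_norm_sq d (WithLp.toLp 2 (√(1 - ‖u‖ ^ 2), u))
    simp only [WithLp.toLp_fst, WithLp.toLp_snd] at this
    rw [Real.sq_sqrt (by nlinarith)] at this
    have h3 : ‖(WithLp.toLp 2 (√(1 - ‖u‖ ^ 2), u) : PF d)‖ ^ 2 = 1 := by linarith
    exact (pow_eq_one_iff_of_nonneg (norm_nonneg _) two_ne_zero).1 h3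
  · simp only [WithLp.toLp_fst]
    apply Real.le_sqrt_of_sq_le; linarith

lemma capF_hausdorff_upper (d : ℕ) (c : ℝ) (hc : 0 < c) (hc1 : c < 1) :
    μH[(d : ℝ)] (capF d c) ≤
    ENNReal.ofReal ((√(1 - c ^ 2) / c) ^ d) *
      μH[(d : ℝ)] (closedBall (0 : EuclideanSpace ℝ (Fin d)) 1) := by
  have hs : 0 < 1 - c ^ 2 := by nlinarith
  rw [div_pow, div_eq_inv_mul, ENNReal.ofReal_mul (by positivity), mul_assoc,
    ← hausdorff_closedBall_smul d _ (Real.sqrt_pos.2 hs)]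
  let φ : EuclideanSpace ℝ (Fin d) → PF d := fun u => WithLp.toLp 2 (√(1 - ‖u‖ ^ 2), u)
  have hl : LipschitzOnWith (Real.toNNReal (1 / c)) φ
      (closedBall (0 : EuclideanSpace ℝ (Fin d)) √(1 - c ^ 2)) := by
    apply LipschitzOnWith.of_dist_le_mul
    intro u hu v hv
    rw [mem_closedBall_zero_iff] at hu hv
    have hu2 : ‖u‖ ^ 2 ≤ 1 - c ^ 2 := by
      rw [← Real.sq_sqrt hs.le]; gcongr
    have hv2 : ‖v‖ ^ 2 ≤ 1 - c ^ 2 := by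
      rw [← Real.sq_sqrt hs.le]; gcongr
    rw [Real.coe_toNNReal _ (by positivity), dist_eq_norm, dist_eq_norm]
    have h1 := PF_norm_sq d (φ u - φ v)
    simp only [φ, WithLp.sub_fst, WithLp.sub_snd] at h1
    simp only [WithLp.toLp_fst, WithLp.toLp_snd] at h1
    set a := √(1 - ‖u‖ ^ 2) with ha
    set b := √(1 - ‖v‖ ^ 2) with hb
    have ha2 : a ^ 2 = 1 - ‖u‖ ^ 2 := Real.sq_sqrt (by nlinarith)
    have hb2 : b ^ 2 = 1 - ‖v‖ ^ 2 := Real.sq_sqrt (by nlinarith)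
    have hac : c ≤ a := Real.le_sqrt_of_sq_le (by linarith)
    have hbc : c ≤ b := Real.le_sqrt_of_sq_le (by linarith)
    have habs := abs_norm_sub_norm_le u v
    have hsq : (‖u‖ - ‖v‖) ^ 2 ≤ ‖u - v‖ ^ 2 := by
      rw [← sq_abs (‖u‖ - ‖v‖)]; gcongr
    have h3 : (a + b) ^ 2 * (a - b) ^ 2 = (‖u‖ + ‖v‖) ^ 2 * (‖u‖ - ‖v‖) ^ 2 := by
      have : (a + b) * (a - b) = (‖v‖ + ‖u‖) * (‖v‖ - ‖u‖) := by linear_combination ha2 - hb2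
      calc _ = ((a + b) * (a - b)) ^ 2 := by ring
        _ = _ := by rw [this]; ring
    have h4 : (‖u‖ + ‖v‖) ^ 2 ≤ 4 * (1 - c ^ 2) := by nlinarith [sq_nonneg (‖u‖ - ‖v‖)]
    have h5 : 4 * c ^ 2 ≤ (a + b) ^ 2 := by
      have e0 : 2 * c ≤ a + b := by linarith
      calc 4 * c ^ 2 = (2 * c) ^ 2 := by ring
        _ ≤ _ := by gcongr
    have h6 : c ^ 2 * (a - b) ^ 2 ≤ (1 - c ^ 2) * ‖u - v‖ ^ 2 := by
      have e1 : 4 * c ^ 2 * (a - b) ^ 2 ≤ (a + b) ^ 2 * (a - b) ^ 2 := by gcongr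
      have e2 : (‖u‖ + ‖v‖) ^ 2 * (‖u‖ - ‖v‖) ^ 2 ≤ 4 * (1 - c ^ 2) * ‖u - v‖ ^ 2 := by gcongr
      linarith
    have h7 : (c * ‖φ u - φ v‖) ^ 2 ≤ ‖u - v‖ ^ 2 := by
      rw [mul_pow]; simp only [φ]; rw [h1]; linarith
    have h8 := abs_le_of_sq_le_sq' h7 (norm_nonneg _) |>.2
    rw [one_div, ← div_eq_inv_mul, le_div_iff₀ hc]; linarith
  have h2 := hl.hausdorffMeasure_image_le (d := (d : ℝ)) (by positivity)
  have e : ENNReal.ofReal (c ^ d)⁻¹ = ((Real.toNNReal (1 / c) : ℝ≥0) : ℝ≥0∞) ^ (d : ℝ) := by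
    rw [ENNReal.rpow_natCast, ← inv_pow, ENNReal.ofReal_pow (by positivity), one_div]; rfl
  rw [e]
  refine le_trans (measure_mono ?_) h2
  rintro y ⟨hy, hyc⟩
  have h := PF_norm_sq d y
  rw [hy] at h
  refine ⟨y.snd, ?_, ?_⟩
  · rw [mem_closedBall_zero_iff]
    apply Real.le_sqrt_of_sq_le; nlinarith
  · simp only [φ]
    have : √(1 - ‖y.snd‖ ^ 2) = y.fst := by
      rw [show 1 - ‖y.snd‖ ^ 2 = y.fst ^ 2 by linarith]
      exact Real.sqrt_sq (by linarith)
    rw [this]; rfl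

def coneF (d : ℕ) (t : ℝ) : Set (PF d) := {x | x.fst ∈ Set.Ioo (0 : ℝ) 1 ∧ ‖x.snd‖ ≤ t * x.fst}

lemma PF_continuous_fst (d : ℕ) : Continuous (fun x : PF d => x.fst) :=
  continuous_fst.comp (WithLp.prod_continuous_ofLp 2 _ _)
lemma PF_continuous_snd (d : ℕ) : Continuous (fun x : PF d => x.snd) :=
  continuous_snd.comp (WithLp.prod_continuous_ofLp 2 _ _)

lemma measurableSet_coneF (d : ℕ) (t : ℝ) : MeasurableSet (coneF d t) := by
  apply MeasurableSet.inter
  · exact (PF_continuous_fst d).measurable measurableSet_Ioo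
  · exact (isClosed_le (PF_continuous_snd d).norm
      (continuous_const.mul (PF_continuous_fst d))).measurableSet

lemma volume_closedBall_smul (d : ℕ) (s : ℝ) (hs : 0 ≤ s) :
    volume (closedBall (0 : EuclideanSpace ℝ (Fin d)) s) =
      ENNReal.ofReal (s ^ d) * volume (closedBall (0 : EuclideanSpace ℝ (Fin d)) 1) := by
  have := Measure.addHaar_smul_of_nonneg (volume : Measure (EuclideanSpace ℝ (Fin d))) hs
    (closedBall (0 : EuclideanSpace ℝ (Fin d)) 1)
  rw [smul_unitClosedBall_of_nonneg hs] at this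
  rw [this]; simp

lemma volume_coneF (d : ℕ) (t : ℝ) (ht : 0 < t) :
    volume (coneF d t) = ENNReal.ofReal (t ^ d / (d + 1)) *
      volume (closedBall (0 : EuclideanSpace ℝ (Fin d)) 1) := by
  have h1 := (WithLp.volume_preserving_toLp ℝ (EuclideanSpace ℝ (Fin d))).measure_preimage
    (measurableSet_coneF d t).nullMeasurableSet
  rw [← h1, Measure.volume_eq_prod, Measure.prod_apply
    ((WithLp.volume_preserving_toLp ℝ (EuclideanSpace ℝ (Fin d))).measurable
      (measurableSet_coneF d t))]
  have h2 : ∀ h : ℝ, volume (Prod.mk h ⁻¹' (WithLp.toLp 2 ⁻¹' coneF d t)) =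
      (Set.Ioo (0 : ℝ) 1).indicator (fun h => ENNReal.ofReal ((t * h) ^ d) *
        volume (closedBall (0 : EuclideanSpace ℝ (Fin d)) 1)) h := by
    intro h
    by_cases hh : h ∈ Set.Ioo (0 : ℝ) 1
    · rw [Set.indicator_of_mem hh, ← volume_closedBall_smul d _ (mul_nonneg ht.le hh.1.le)]
      congr 1
      ext u
      simp only [coneF, Set.mem_preimage, Set.mem_ofPred_eq, mem_closedBall_zero_iff]
      exact and_iff_right hh
    · rw [Set.indicator_of_notMem hh]
      have he : Prod.mk h ⁻¹' (WithLp.toLp 2 ⁻¹' coneF d t) = ∅ := by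
        ext u
        simp only [coneF, Set.mem_preimage, Set.mem_ofPred_eq, Set.mem_empty_iff_false, iff_false]
        exact fun H => hh H.1
      rw [he, measure_empty]
  simp_rw [h2]
  rw [lintegral_indicator measurableSet_Ioo, lintegral_mul_const _ (by fun_prop)]
  congr 1
  rw [restrict_Ioo_eq_restrict_Ioc, ← ofReal_integral_eq_lintegral_ofReal,
    ← intervalIntegral.integral_of_le zero_le_one]
  · congr 1
    simp only [mul_pow]
    rw [intervalIntegral.integral_const_mul, integral_pow]
    simp; ring
  · exact (Continuous.integrableOn_Icc (by fun_prop)).mono_set Set.Ioc_subset_Icc_self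
  · filter_upwards [ae_restrict_mem measurableSet_Ioc] with h hh
    exact pow_nonneg (mul_nonneg ht.le hh.1.le) _

open scoped Pointwise in
lemma volume_cap_upper (d : ℕ) (c : ℝ) (hc : 0 < c) (hc1 : c < 1) :
    volume (Set.Ioo (0 : ℝ) 1 • capF d c) ≤ ENNReal.ofReal ((√(1 - c ^ 2) / c) ^ d / (d + 1)) *
      volume (closedBall (0 : EuclideanSpace ℝ (Fin d)) 1) := by
  have hs : 0 < 1 - c ^ 2 := by nlinarith
  rw [← volume_coneF d _ (by positivity)]
  apply measure_mono
  rintro _ ⟨ρ, ⟨hρ, hρ1⟩, y, ⟨hy, hyc⟩, rfl⟩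
  have h := PF_norm_sq d y
  rw [hy] at h
  have hy1 : y.fst ≤ 1 := by nlinarith [sq_nonneg ‖y.snd‖]
  simp only [coneF, Set.mem_ofPred_eq, WithLp.smul_fst, WithLp.smul_snd, smul_eq_mul, norm_smul,
    Set.mem_Ioo]
  refine ⟨⟨by nlinarith, by nlinarith⟩, ?_⟩
  have h1 : ‖y.snd‖ ≤ √(1 - c ^ 2) := by apply Real.le_sqrt_of_sq_le; nlinarith
  rw [Real.norm_of_nonneg hρ.le]
  calc ρ * ‖y.snd‖ ≤ ρ * √(1 - c ^ 2) := by gcongr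
    _ = √(1 - c ^ 2) / c * (ρ * c) := by field_simp
    _ ≤ _ := by gcongr

lemma finrank_PF (d : ℕ) : Module.finrank ℝ (PF d) = d + 1 := by
  rw [(WithLp.linearEquiv 2 ℝ (ℝ × EuclideanSpace ℝ (Fin d))).finrank_eq]
  simp [add_comm]

open scoped Pointwise in
lemma volume_cap_lower (d : ℕ) (c : ℝ) (hc : 0 < c) (hc1 : c < 1) :
    ENNReal.ofReal (c ^ (d + 1) * ((√(1 - c ^ 2) / c) ^ d / (d + 1))) *
      volume (closedBall (0 : EuclideanSpace ℝ (Fin d)) 1) ≤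
      volume (Set.Ioo (0 : ℝ) 1 • capF d c) := by
  have hs : 0 < 1 - c ^ 2 := by nlinarith
  rw [ENNReal.ofReal_mul (by positivity), mul_assoc, ← volume_coneF d _ (by positivity)]
  have := Measure.addHaar_smul_of_nonneg (volume : Measure (PF d)) hc.le
    (coneF d (√(1 - c ^ 2) / c))
  rw [finrank_PF] at this
  rw [← this]
  apply measure_mono
  rintro _ ⟨z, ⟨⟨hz0, hz1⟩, hz⟩, rfl⟩
  have hn := PF_norm_sq d z
  have h2 : (c * ‖z‖) ^ 2 ≤ z.fst ^ 2 := by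
    have : ‖z.snd‖ ^ 2 ≤ (√(1 - c ^ 2) / c * z.fst) ^ 2 := by gcongr
    rw [mul_pow, div_pow, Real.sq_sqrt hs.le] at this
    calc (c * ‖z‖) ^ 2 = c ^ 2 * z.fst ^ 2 + c ^ 2 * ‖z.snd‖ ^ 2 := by rw [mul_pow, hn]; ring
      _ ≤ c ^ 2 * z.fst ^ 2 + c ^ 2 * ((1 - c ^ 2) / c ^ 2 * z.fst ^ 2) := by gcongr
      _ = _ := by field_simp; ring
  have h3 : c * ‖z‖ ≤ z.fst := abs_le_of_sq_le_sq' h2 hz0.le |>.2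
  have hzn : 0 < ‖z‖ := by
    rw [norm_pos_iff]; rintro rfl; simp at hz0
  refine ⟨c * ‖z‖, ⟨by positivity, by linarith⟩, ‖z‖⁻¹ • z, ⟨?_, ?_⟩, ?_⟩
  · rw [norm_smul]; simp [hzn.ne']
  · rw [WithLp.smul_fst, smul_eq_mul, ← div_eq_inv_mul, le_div_iff₀ hzn]; exact h3
  · simp only
    rw [smul_smul, mul_assoc, mul_inv_cancel₀ hzn.ne', mul_one]

lemma exists_isom (d : ℕ) (x : EuclideanSpace ℝ (Fin (d + 1))) (hx : ‖x‖ = 1) :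
    ∃ L : EuclideanSpace ℝ (Fin (d + 1)) ≃ₗᵢ[ℝ] PF d, L x = WithLp.toLp 2 (1, 0) := by
  let L0 := ((stdOrthonormalBasis ℝ (PF d)).reindex (finCongr (finrank_PF d))).repr.symm
  let e : PF d := WithLp.toLp 2 (1, 0)
  have he : ‖e‖ = 1 := by
    have := PF_norm_sq d e
    simp only [e, WithLp.toLp_fst, WithLp.toLp_snd, norm_zero] at this
    exact (pow_eq_one_iff_of_nonneg (norm_nonneg _) two_ne_zero).1 (by linarith)
  have hn : ‖L0 x‖ = ‖e‖ := by rw [L0.norm_map, hx, he]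
  exact ⟨L0.trans (Submodule.reflection (ℝ ∙ (L0 x - e))ᗮ), Submodule.reflection_sub hn⟩

lemma isom_image_cap (d : ℕ) (x : EuclideanSpace ℝ (Fin (d + 1)))
    (L : EuclideanSpace ℝ (Fin (d + 1)) ≃ₗᵢ[ℝ] PF d) (hL : L x = WithLp.toLp 2 (1, 0))
    (r : ℝ) (hr : 0 ≤ r) :
    L '' (sphere 0 1 ∩ closedBall x r) = capF d (1 - r ^ 2 / 2) := by
  have key : ∀ z : PF d, ‖z‖ = 1 → (‖z - L x‖ ≤ r ↔ 1 - r ^ 2 / 2 ≤ z.fst) := by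
    intro z hz
    have h1 := PF_norm_sq d (z - L x)
    have h2 := PF_norm_sq d z
    rw [hL, WithLp.sub_fst, WithLp.sub_snd] at h1
    simp only [WithLp.toLp_fst, WithLp.toLp_snd, sub_zero] at h1
    rw [← hL] at h1
    rw [hz] at h2
    rw [← sq_le_sq₀ (norm_nonneg _) hr, h1]
    constructor <;> intro h <;> nlinarith
  ext z
  constructor
  · rintro ⟨y, ⟨hy, hyr⟩, rfl⟩
    rw [mem_sphere_zero_iff_norm] at hy
    have hz : ‖L y‖ = 1 := by rw [L.norm_map, hy]
    refine ⟨hz, (key _ hz).1 ?_⟩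
    rw [← map_sub, L.norm_map, ← dist_eq_norm]; exact hyr
  · rintro ⟨hz, hzc⟩
    refine ⟨L.symm z, ⟨?_, ?_⟩, L.apply_symm_apply z⟩
    · rw [mem_sphere_zero_iff_norm, L.symm.norm_map, hz]
    · rw [mem_closedBall, dist_eq_norm, ← L.norm_map, map_sub, L.apply_symm_apply]
      exact (key _ hz).2 hzc

def surfT (d : ℕ) : Measure (EuclideanSpace ℝ (Fin (d + 1))) :=
  (volume : Measure (EuclideanSpace ℝ (Fin (d + 1)))).toSphere.map Subtype.val

instance (d : ℕ) : IsFiniteMeasure (surfT d) := by unfold surfT; infer_instance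

open scoped Pointwise in
lemma surfT_apply (d : ℕ) (A : Set (EuclideanSpace ℝ (Fin (d + 1)))) (hA : MeasurableSet A) :
    surfT d A = (d + 1 : ℕ) * volume (Set.Ioo (0 : ℝ) 1 • (sphere 0 1 ∩ A)) := by
  rw [surfT, Measure.map_apply measurable_subtype_coe hA,
    Measure.toSphere_apply' _ (measurable_subtype_coe hA), Subtype.image_preimage_coe]
  simp

open scoped Pointwise in
lemma surfT_ball (d : ℕ) (x : EuclideanSpace ℝ (Fin (d + 1)))
    (hx : ‖x‖ = 1) (r : ℝ) (hr : 0 ≤ r) :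
    surfT d (closedBall x r) =
      (d + 1 : ℕ) * volume (Set.Ioo (0 : ℝ) 1 • capF d (1 - r ^ 2 / 2)) := by
  obtain ⟨L, hL⟩ := exists_isom d x hx
  rw [surfT_apply _ _ measurableSet_closedBall, ← isom_image_cap d x L hL r hr]
  congr 1
  have h1 : Set.Ioo (0 : ℝ) 1 • (L '' (sphere 0 1 ∩ closedBall x r)) =
      L '' (Set.Ioo (0 : ℝ) 1 • (sphere 0 1 ∩ closedBall x r)) := by
    ext z
    constructor
    · rintro ⟨ρ, hρ, _, ⟨y, hy, rfl⟩, rfl⟩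
      exact ⟨ρ • y, ⟨ρ, hρ, y, hy, rfl⟩, by simp⟩
    · rintro ⟨_, ⟨ρ, hρ, y, hy, rfl⟩, rfl⟩
      exact ⟨ρ, hρ, L y, ⟨y, hy, rfl⟩, by simp⟩
  rw [h1, LinearIsometryEquiv.image_eq_preimage_symm]
  exact (MeasurePreserving.measure_preimage_equiv (f := L.symm.toMeasurableEquiv)
    L.symm.measurePreserving _).symm

/-- unnormalized surface measure -/
def surfH (d : ℕ) : Measure (EuclideanSpace ℝ (Fin (d + 1))) :=
  μH[(d : ℝ)].restrict (sphere (0 : EuclideanSpace ℝ (Fin (d + 1))) 1)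

lemma surfH_ball (d : ℕ) (x : EuclideanSpace ℝ (Fin (d + 1)))
    (hx : ‖x‖ = 1) (r : ℝ) (hr : 0 ≤ r) :
    surfH d (closedBall x r) = μH[(d : ℝ)] (capF d (1 - r ^ 2 / 2)) := by
  obtain ⟨L, hL⟩ := exists_isom d x hx
  rw [surfH, Measure.restrict_apply measurableSet_closedBall, Set.inter_comm,
    ← isom_image_cap d x L hL r hr]
  exact (L.toIsometryEquiv.hausdorffMeasure_image _ _).symm

def betaH (d : ℕ) : ℝ≥0∞ := μH[(d : ℝ)] (closedBall (0 : EuclideanSpace ℝ (Fin d)) 1)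
def omegaV (d : ℕ) : ℝ≥0∞ := volume (closedBall (0 : EuclideanSpace ℝ (Fin d)) 1)

lemma betaH_ne (d : ℕ) : betaH d ≠ 0 ∧ betaH d ≠ ⊤ := by
  have : (μH[(d : ℝ)] : Measure (EuclideanSpace ℝ (Fin d))).IsAddHaarMeasure := by
    simpa using MeasureTheory.isAddHaarMeasure_hausdorffMeasure (E := EuclideanSpace ℝ (Fin d))
  exact ⟨(measure_closedBall_pos _ _ one_pos).ne', measure_closedBall_lt_top.ne⟩

lemma omegaV_ne (d : ℕ) : omegaV d ≠ 0 ∧ omegaV d ≠ ⊤ :=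
  ⟨(measure_closedBall_pos _ _ one_pos).ne', measure_closedBall_lt_top.ne⟩

lemma surf_bounds (d : ℕ) (x : EuclideanSpace ℝ (Fin (d + 1)))
    (hx : ‖x‖ = 1) (r : ℝ) (hr : 0 < r) (hr1 : r < 1) (c : ℝ) (hc : c = 1 - r ^ 2 / 2) :
    ENNReal.ofReal (√(1 - c ^ 2) ^ d) * betaH d ≤ surfH d (closedBall x r) ∧
    surfH d (closedBall x r) ≤ ENNReal.ofReal ((√(1 - c ^ 2) / c) ^ d) * betaH d ∧
    ENNReal.ofReal (c * √(1 - c ^ 2) ^ d) * omegaV d ≤ surfT d (closedBall x r) ∧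
    surfT d (closedBall x r) ≤ ENNReal.ofReal ((√(1 - c ^ 2) / c) ^ d) * omegaV d := by
  have hc0 : 0 < c := by nlinarith
  have hc1 : c < 1 := by nlinarith
  rw [surfH_ball d x hx r hr.le, surfT_ball d x hx r hr.le, ← hc]
  refine ⟨capF_hausdorff_lower d c hc0 hc1, capF_hausdorff_upper d c hc0 hc1, ?_, ?_⟩
  · have := volume_cap_lower d c hc0 hc1
    refine le_trans (le_of_eq ?_) (mul_le_mul_right this _)
    rw [← mul_assoc, ← ENNReal.ofReal_natCast, ← ENNReal.ofReal_mul (by positivity)]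
    congr 2
    push_cast
    rw [div_pow]; field_simp; ring
  · have := volume_cap_upper d c hc0 hc1
    refine le_trans (mul_le_mul_right this _) (le_of_eq ?_)
    rw [← mul_assoc, ← ENNReal.ofReal_natCast, ← ENNReal.ofReal_mul (by positivity)]
    congr 2
    push_cast
    field_simp

instance (d : ℕ) : IsFiniteMeasure (surfH d) := by
  constructor
  rw [surfH, Measure.restrict_apply_univ]
  refine (isCompact_sphere (0 : EuclideanSpace ℝ (Fin (d + 1))) 1).measure_lt_top_of_nhdsWithin ?_
  intro x hx
  rw [mem_sphere_zero_iff_norm] at hx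
  refine ⟨sphere 0 1 ∩ closedBall x (1 / 2), inter_mem_nhdsWithin _
    (closedBall_mem_nhds x (by norm_num)), ?_⟩
  have h := (surf_bounds d x hx (1 / 2) (by norm_num) (by norm_num) _ rfl).2.1
  rw [surfH, Measure.restrict_apply measurableSet_closedBall, Set.inter_comm] at h
  exact h.trans_lt (ENNReal.mul_lt_top ENNReal.ofReal_lt_top (betaH_ne d).2.lt_top)

lemma ratio_tendsto (d : ℕ) (x : EuclideanSpace ℝ (Fin (d + 1))) (hx : ‖x‖ = 1) :
    Tendsto (fun r => surfH d (closedBall x r) / surfT d (closedBall x r)) (𝓝[>] 0)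
      (𝓝 (betaH d / omegaV d)) := by
  obtain ⟨hb0, hbt⟩ := betaH_ne d
  obtain ⟨ho0, hot⟩ := omegaV_ne d
  have hK : betaH d / omegaV d ≠ ⊤ := (ENNReal.div_lt_top hbt ho0).ne
  have hlim1 : Tendsto (fun r : ℝ => ENNReal.ofReal ((1 - r ^ 2 / 2) ^ d) * (betaH d / omegaV d))
      (𝓝[>] 0) (𝓝 (betaH d / omegaV d)) := by
    have : Tendsto (fun r : ℝ => (1 - r ^ 2 / 2) ^ d) (𝓝[>] 0) (𝓝 1) := by
      have : Continuous (fun r : ℝ => (1 - r ^ 2 / 2) ^ d) := by fun_prop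
      simpa using this.tendsto' 0 1 (by simp) |>.mono_left nhdsWithin_le_nhds
    have := ENNReal.Tendsto.mul_const (ENNReal.tendsto_ofReal this) (Or.inr hK)
    simpa using this
  have hlim2 : Tendsto (fun r : ℝ => ENNReal.ofReal (((1 - r ^ 2 / 2) ^ (d + 1))⁻¹) *
      (betaH d / omegaV d)) (𝓝[>] 0) (𝓝 (betaH d / omegaV d)) := by
    have : Tendsto (fun r : ℝ => ((1 - r ^ 2 / 2) ^ (d + 1))⁻¹) (𝓝[>] 0) (𝓝 1) := by
      have h0 : Continuous (fun r : ℝ => (1 - r ^ 2 / 2) ^ (d + 1)) := by fun_prop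
      have h1 : Tendsto (fun r : ℝ => (1 - r ^ 2 / 2) ^ (d + 1)) (𝓝[>] 0) (𝓝 1) := by
        simpa using h0.tendsto' 0 1 (by simp) |>.mono_left nhdsWithin_le_nhds
      simpa using h1.inv₀ one_ne_zero
    have := ENNReal.Tendsto.mul_const (ENNReal.tendsto_ofReal this) (Or.inr hK)
    simpa using this
  have hev : ∀ᶠ r : ℝ in 𝓝[>] 0, r ∈ Set.Ioo (0 : ℝ) 1 := Ioo_mem_nhdsGT one_pos
  refine tendsto_of_tendsto_of_tendsto_of_le_of_le' hlim1 hlim2 ?_ ?_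
  · filter_upwards [hev] with r hr
    obtain ⟨h1, h2, h3, h4⟩ := surf_bounds d x hx r hr.1 hr.2 _ rfl
    set c := 1 - r ^ 2 / 2 with hc
    have hc0 : 0 < c := by nlinarith [hr.1, hr.2]
    have hc1 : c < 1 := by nlinarith [hr.1, hr.2]
    have hs : 0 < 1 - c ^ 2 := by nlinarith
    refine le_trans (le_of_eq ?_) (ENNReal.div_le_div h1 h4)
    rw [ENNReal.mul_div_mul_comm (Or.inl (by simp; positivity)) (Or.inl ENNReal.ofReal_ne_top),
      ← ENNReal.ofReal_div_of_pos (by positivity)]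
    congr 2
    rw [div_pow]; field_simp
  · filter_upwards [hev] with r hr
    obtain ⟨h1, h2, h3, h4⟩ := surf_bounds d x hx r hr.1 hr.2 _ rfl
    set c := 1 - r ^ 2 / 2 with hc
    have hc0 : 0 < c := by nlinarith [hr.1, hr.2]
    have hc1 : c < 1 := by nlinarith [hr.1, hr.2]
    have hs : 0 < 1 - c ^ 2 := by nlinarith
    refine le_trans (ENNReal.div_le_div h2 h3) (le_of_eq ?_)
    rw [ENNReal.mul_div_mul_comm (Or.inl (by simp; positivity)) (Or.inl ENNReal.ofReal_ne_top),
      ← ENNReal.ofReal_div_of_pos (by positivity)]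
    congr 2
    rw [div_pow]; field_simp; ring

lemma surfT_ae (d : ℕ) : ∀ᵐ x ∂surfT d, ‖x‖ = 1 := by
  rw [surfT, ae_map_iff measurable_subtype_coe.aemeasurable
    (measurableSet_eq_fun measurable_norm measurable_const)]
  exact Eventually.of_forall fun x => mem_sphere_zero_iff_norm.1 x.2

lemma surfH_ae (d : ℕ) : ∀ᵐ x ∂surfH d, ‖x‖ = 1 := by
  filter_upwards [ae_restrict_mem (isClosed_sphere).measurableSet] with x hx
  exact mem_sphere_zero_iff_norm.1 hx

lemma surfH_eq (d : ℕ) : surfH d = (betaH d / omegaV d) • surfT d := by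
  obtain ⟨hb0, hbt⟩ := betaH_ne d
  obtain ⟨ho0, hot⟩ := omegaV_ne d
  have hK : betaH d / omegaV d ≠ ⊤ := (ENNReal.div_lt_top hbt ho0).ne
  have hK0 : betaH d / omegaV d ≠ 0 := (ENNReal.div_pos hb0 hot).ne'
  have key : ∀ (ρ μ : Measure (EuclideanSpace ℝ (Fin (d + 1)))) [IsFiniteMeasure ρ]
      [IsFiniteMeasure μ] (k : ℝ≥0∞), (∀ᵐ x ∂μ, Tendsto (fun r => ρ (closedBall x r) /
      μ (closedBall x r)) (𝓝[>] 0) (𝓝 k)) → k • μ ≤ ρ := by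
    intro ρ μ _ _ k h
    have h1 : ρ.rnDeriv μ =ᵐ[μ] fun _ => k := by
      filter_upwards [h, Besicovitch.ae_tendsto_rnDeriv ρ μ] with x h1 h2
      exact tendsto_nhds_unique h2 h1
    have h2 := Measure.withDensity_rnDeriv_le ρ μ
    rwa [withDensity_congr_ae h1, withDensity_const] at h2
  apply le_antisymm
  · have := key (surfT d) (surfH d) (betaH d / omegaV d)⁻¹ (by
      filter_upwards [surfH_ae d] with x hx
      have h1 := (ratio_tendsto d x hx).inv
      refine h1.congr' ?_
      have hev : ∀ᶠ r : ℝ in 𝓝[>] 0, r ∈ Set.Ioo (0 : ℝ) 1 := Ioo_mem_nhdsGT one_pos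
      filter_upwards [hev] with r hr
      rw [ENNReal.inv_div (Or.inl (measure_ne_top _ _))]
      left
      obtain ⟨-, -, h3, -⟩ := surf_bounds d x hx r hr.1 hr.2 _ rfl
      set c := 1 - r ^ 2 / 2 with hc
      have hc0 : 0 < c := by nlinarith [hr.1, hr.2]
      have hc1 : c < 1 := by nlinarith [hr.1, hr.2]
      have hs : 0 < 1 - c ^ 2 := by nlinarith
      refine (lt_of_lt_of_le ?_ h3).ne'
      exact ENNReal.mul_pos (by simp; positivity) ho0)
    intro A
    have h := this A
    simp only [Measure.smul_apply, smul_eq_mul] at h ⊢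
    calc surfH d A = (betaH d / omegaV d) * ((betaH d / omegaV d)⁻¹ * surfH d A) := by
          rw [← mul_assoc, ENNReal.mul_inv_cancel hK0 hK, one_mul]
      _ ≤ _ := by gcongr
  · exact key _ _ _ (by filter_upwards [surfT_ae d] with x hx using ratio_tendsto d x hx)

lemma lintegral_halfball_PF (d : ℕ) :
    ∫⁻ z : PF d, ENNReal.ofReal z.fst * (ball (0 : PF d) 1).indicator 1 z =
      ENNReal.ofReal (1 / (d + 2)) * omegaV d := by
  have hm : Measurable fun z : PF d => ENNReal.ofReal z.fst * (ball (0 : PF d) 1).indicator 1 z :=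
    ((PF_continuous_fst d).measurable.ennreal_ofReal).mul
      (measurable_one.indicator measurableSet_ball)
  have h1 := (WithLp.volume_preserving_toLp ℝ (EuclideanSpace ℝ (Fin d))).lintegral_comp hm
  rw [← h1, Measure.volume_eq_prod, lintegral_prod (fun a => ENNReal.ofReal (WithLp.toLp 2 a : PF d).fst *
      (ball (0 : PF d) 1).indicator 1 (WithLp.toLp 2 a : PF d))
    (hm.comp (WithLp.volume_preserving_toLp ℝ (EuclideanSpace ℝ (Fin d))).measurable).aemeasurable]
  have h2 : ∀ h : ℝ, (∫⁻ u : EuclideanSpace ℝ (Fin d),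
      ENNReal.ofReal (WithLp.toLp 2 (h, u) : PF d).fst *
        (ball (0 : PF d) 1).indicator 1 (WithLp.toLp 2 (h, u) : PF d)) =
      (Set.Ioo (0 : ℝ) 1).indicator (fun h => ENNReal.ofReal (h * √(1 - h ^ 2) ^ d) * omegaV d) h := by
    intro h
    simp only [WithLp.toLp_fst]
    by_cases hh : h ∈ Set.Ioo (0 : ℝ) 1
    · have hs : 0 < 1 - h ^ 2 := by nlinarith [hh.1, hh.2]
      rw [Set.indicator_of_mem hh]
      have h3 : ∀ u : EuclideanSpace ℝ (Fin d),
          (ball (0 : PF d) 1).indicator (1 : PF d → ℝ≥0∞) (WithLp.toLp 2 (h, u) : PF d) =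
          (ball (0 : EuclideanSpace ℝ (Fin d)) √(1 - h ^ 2)).indicator 1 u := by
        intro u
        simp only [Set.indicator, mem_ball_zero_iff, Pi.one_apply]
        have := PF_norm_sq d (WithLp.toLp 2 (h, u))
        simp only [WithLp.toLp_fst, WithLp.toLp_snd] at this
        congr 1
        rw [Real.lt_sqrt (norm_nonneg _), ← sq_lt_one_iff₀ (norm_nonneg _), this, eq_iff_iff]
        constructor <;> intro <;> linarith
      simp_rw [h3]
      rw [lintegral_const_mul' _ _ ENNReal.ofReal_ne_top, lintegral_indicator_one measurableSet_ball,
        Measure.addHaar_ball_of_pos _ _ (Real.sqrt_pos.2 hs), ENNReal.ofReal_mul hh.1.le, mul_assoc,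
        ← Measure.addHaar_unitClosedBall_eq_addHaar_unitBall, omegaV]
      simp
    · rw [Set.indicator_of_notMem hh, lintegral_eq_zero_iff' (by
        apply AEMeasurable.const_mul
        exact ((measurable_one.indicator measurableSet_ball).comp
          ((WithLp.volume_preserving_toLp ℝ (EuclideanSpace ℝ (Fin d))).measurable.comp
            measurable_prodMk_left)).aemeasurable)]
      refine Eventually.of_forall fun u => ?_
      simp only [Pi.zero_apply, mul_eq_zero, ENNReal.ofReal_eq_zero]
      by_cases h0 : h ≤ 0
      · exact Or.inl h0
      · right
        apply Set.indicator_of_notMem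
        rw [mem_ball_zero_iff]
        have := PF_norm_sq d (WithLp.toLp 2 (h, u))
        simp only [WithLp.toLp_fst, WithLp.toLp_snd] at this
        have h1 : 1 ≤ h := by
          by_contra hlt; exact hh ⟨not_le.1 h0, not_le.1 hlt⟩
        rw [← sq_lt_one_iff₀ (norm_nonneg _), this]
        nlinarith [sq_nonneg ‖u‖]
  simp_rw [h2]
  rw [lintegral_indicator measurableSet_Ioo, lintegral_mul_const _ (by fun_prop)]
  congr 1
  have hcont : Continuous fun h : ℝ => h * √(1 - h ^ 2) ^ d := by fun_prop
  rw [restrict_Ioo_eq_restrict_Ioc, ← ofReal_integral_eq_lintegral_ofReal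
    (hcont.integrableOn_Icc.mono_set Set.Ioc_subset_Icc_self),
    ← intervalIntegral.integral_of_le zero_le_one]
  · congr 1
    have := intervalIntegral.integral_eq_sub_of_hasDerivAt_of_le (a := 0) (b := 1) zero_le_one
      (f := fun h => -(√(1 - h ^ 2) ^ (d + 2) / (d + 2)))
      (f' := fun h : ℝ => h * √(1 - h ^ 2) ^ d) (by fun_prop) (by
        intro h hh
        have hs : 0 < 1 - h ^ 2 := by nlinarith [hh.1, hh.2]
        have e1 : HasDerivAt (fun h : ℝ => 1 - h ^ 2) (-(2 * h)) h := by
          simpa using (hasDerivAt_pow 2 h).const_sub 1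
        have e2 := (((e1.sqrt hs.ne').pow (d + 2)).div_const ((d : ℝ) + 2)).neg
        refine e2.congr_deriv ?_
        have : √(1 - h ^ 2) ≠ 0 := (Real.sqrt_pos.2 hs).ne'
        push_cast
        field_simp; ring) (hcont.intervalIntegrable _ _)
    rw [this]
    simp
  · filter_upwards [ae_restrict_mem measurableSet_Ioc] with h hh
    exact mul_nonneg hh.1.le (by positivity)

lemma lintegral_volumeIoiPow (d : ℕ) :
    ∫⁻ r : Set.Ioi (0 : ℝ), ENNReal.ofReal r.1 *
      (Set.Iio (⟨1, Set.mem_Ioi.2 one_pos⟩ : Set.Ioi (0 : ℝ))).indicator 1 r ∂(Measure.volumeIoiPow d) =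
      ENNReal.ofReal (1 / (d + 2)) := by
  have h := Measure.volumeIoiPow_apply_Iio (d + 1) ⟨1, Set.mem_Ioi.2 one_pos⟩
  rw [Measure.volumeIoiPow, withDensity_apply _ measurableSet_Iio,
    ← lintegral_indicator measurableSet_Iio] at h
  rw [Measure.volumeIoiPow, lintegral_withDensity_eq_lintegral_mul _ (by fun_prop)
    (by
      apply Measurable.mul (by fun_prop)
      exact measurable_one.indicator measurableSet_Iio)]
  have e : ENNReal.ofReal (1 / ((d : ℝ) + 2)) =
      ENNReal.ofReal ((1 : ℝ) ^ (d + 1 + 1) / (((d + 1 : ℕ) : ℝ) + 1)) := by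
    congr 1; push_cast; rw [one_pow]; congr 1; ring
  rw [e, ← h]
  congr 1
  ext r
  simp only [Pi.mul_apply, Set.indicator]
  split_ifs
  · rw [Pi.one_apply, mul_one, ← ENNReal.ofReal_mul (by have := r.2.out; positivity), pow_succ]
  · simp

lemma lintegral_polar (d : ℕ) (e : EuclideanSpace ℝ (Fin (d + 1))) :
    ∫⁻ x : EuclideanSpace ℝ (Fin (d + 1)), ENNReal.ofReal ⟪e, x⟫ *
      (ball (0 : EuclideanSpace ℝ (Fin (d + 1))) 1).indicator 1 x =
    (∫⁻ y, ENNReal.ofReal ⟪e, y⟫ ∂surfT d) * ENNReal.ofReal (1 / (d + 2)) := by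
  rw [← lintegral_volumeIoiPow d, surfT, lintegral_map (by fun_prop) measurable_subtype_coe]
  have hmp := (volume : Measure (EuclideanSpace ℝ (Fin (d + 1)))).measurePreserving_homeomorphUnitSphereProd
  rw [show Module.finrank ℝ (EuclideanSpace ℝ (Fin (d + 1))) - 1 = d by simp] at hmp
  rw [← lintegral_prod_mul (by fun_prop) (by
      apply Measurable.aemeasurable
      apply Measurable.mul (by fun_prop)
      exact measurable_one.indicator measurableSet_Iio),
    ← hmp.lintegral_comp_emb (Homeomorph.measurableEmbedding _)]
  have hl : ∫⁻ x : EuclideanSpace ℝ (Fin (d + 1)), ENNReal.ofReal ⟪e, x⟫ *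
      (ball (0 : EuclideanSpace ℝ (Fin (d + 1))) 1).indicator 1 x =
      ∫⁻ x : ({0}ᶜ : Set (EuclideanSpace ℝ (Fin (d + 1)))), ENNReal.ofReal ⟪e, x.1⟫ *
      (ball (0 : EuclideanSpace ℝ (Fin (d + 1))) 1).indicator 1 x.1
        ∂(Measure.comap Subtype.val volume) := by
    rw [lintegral_subtype_comap (measurableSet_singleton _).compl
      (fun x => ENNReal.ofReal ⟪e, x⟫ *
      (ball (0 : EuclideanSpace ℝ (Fin (d + 1))) 1).indicator 1 x), restrict_compl_singleton]
  rw [hl]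
  refine lintegral_congr fun x => ?_
  have hx : 0 < ‖(x : EuclideanSpace ℝ (Fin (d + 1)))‖ := norm_pos_iff.2 x.2
  rw [← mul_assoc, ← ENNReal.ofReal_mul' (by simp)]
  congr 1
  · congr 1
    simp only [homeomorphUnitSphereProd_apply_fst_coe, homeomorphUnitSphereProd_apply_snd_coe,
      inner_smul_right]
    field_simp
  · simp only [Set.indicator, mem_ball_zero_iff, Set.mem_Iio, ← Subtype.coe_lt_coe,
      homeomorphUnitSphereProd_apply_snd_coe, Pi.one_apply]

lemma lintegral_surfT (d : ℕ) (e : EuclideanSpace ℝ (Fin (d + 1))) (he : ‖e‖ = 1) :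
    ∫⁻ y, ENNReal.ofReal ⟪e, y⟫ ∂surfT d = omegaV d := by
  obtain ⟨L, hL⟩ := exists_isom d e he
  have h1 := lintegral_polar d e
  have h2 := lintegral_halfball_PF d
  have hm : Measurable fun z : PF d => ENNReal.ofReal z.fst * (ball (0 : PF d) 1).indicator 1 z :=
    ((PF_continuous_fst d).measurable.ennreal_ofReal).mul
      (measurable_one.indicator measurableSet_ball)
  rw [← L.measurePreserving.lintegral_comp hm] at h2
  have h3 : ∀ x, ENNReal.ofReal (L x).fst * (ball (0 : PF d) 1).indicator 1 (L x) =
     ENNReal.ofReal ⟪e, x⟫ * (ball (0 : EuclideanSpace ℝ (Fin (d + 1))) 1).indicator 1 x := by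
    intro x
    congr 1
    · rw [← L.inner_map_map, hL, WithLp.prod_inner_apply]; simp
    · simp only [Set.indicator, mem_ball_zero_iff, Pi.one_apply, L.norm_map]
  simp_rw [h3] at h2
  rw [h1, mul_comm] at h2
  exact (ENNReal.mul_right_inj (by simp; positivity) ENNReal.ofReal_ne_top).1 h2

lemma lintegral_surfH (d : ℕ) (e : EuclideanSpace ℝ (Fin (d + 1))) (he : ‖e‖ = 1) :
    ∫⁻ y, ENNReal.ofReal |⟪e, y⟫| ∂surfH d = 2 * betaH d := by
  have h1 : ∀ y, ENNReal.ofReal |⟪e, y⟫| = ENNReal.ofReal ⟪e, y⟫ + ENNReal.ofReal ⟪-e, y⟫ := by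
    intro y
    rw [inner_neg_left]
    rcases le_total 0 ⟪e, y⟫ with h | h
    · rw [abs_of_nonneg h, ENNReal.ofReal_of_nonpos (by linarith : -⟪e, y⟫ ≤ 0), add_zero]
    · rw [abs_of_nonpos h, ENNReal.ofReal_of_nonpos h, zero_add]
  simp_rw [h1]
  rw [surfH_eq, lintegral_smul_measure, lintegral_add_left (by fun_prop), lintegral_surfT d e he,
    lintegral_surfT d (-e) (by rwa [norm_neg]), ← two_mul, smul_eq_mul, mul_left_comm,
    ENNReal.div_mul_cancel (omegaV_ne d).1 (omegaV_ne d).2]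

lemma surfH_univ_ne (d : ℕ) : surfH d Set.univ ≠ 0 := by
  intro h
  have h0 : surfH d = 0 := Measure.measure_univ_eq_zero.1 h
  have := lintegral_surfH d (EuclideanSpace.single 0 1) (by simp)
  rw [h0, lintegral_zero_measure] at this
  exact mul_ne_zero two_ne_zero (betaH_ne d).1 this.symm

lemma surfH_univ (d : ℕ) :
    surfH d Set.univ = μH[(d : ℝ)] (sphere (0 : EuclideanSpace ℝ (Fin (d + 1))) 1) := by
  rw [surfH, Measure.restrict_apply_univ]

lemma sigma_eq (d : ℕ) : sigmaMeasure d = (surfH d Set.univ)⁻¹ • surfH d := by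
  rw [surfH_univ]; rfl

instance sigma_prob (d : ℕ) : IsProbabilityMeasure (sigmaMeasure d) := by
  constructor
  rw [sigma_eq, Measure.smul_apply, smul_eq_mul,
    ENNReal.inv_mul_cancel (surfH_univ_ne d) (measure_ne_top _ _)]

lemma sigma_ae (d : ℕ) : ∀ᵐ x ∂sigmaMeasure d, ‖x‖ = 1 := by
  rw [sigma_eq]
  exact Measure.ae_smul_measure (surfH_ae d) _

lemma sigma_mp (d : ℕ) (L : EuclideanSpace ℝ (Fin (d + 1)) ≃ₗᵢ[ℝ] EuclideanSpace ℝ (Fin (d + 1))) :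
    MeasurePreserving L (sigmaMeasure d) (sigmaMeasure d) := by
  have h1 := L.toIsometryEquiv.measurePreserving_hausdorffMeasure (d : ℝ)
  have h2 := h1.restrict_preimage
    (isClosed_sphere (x := (0 : EuclideanSpace ℝ (Fin (d + 1)))) (ε := 1)).measurableSet
  have h3 : L.toIsometryEquiv ⁻¹' (sphere (0 : EuclideanSpace ℝ (Fin (d + 1))) 1) =
      sphere (0 : EuclideanSpace ℝ (Fin (d + 1))) 1 := by
    ext x; simp
  rw [h3] at h2
  exact h2.smul_measure _

def kap (d : ℕ) : ℝ := (betaH d).toReal / (surfH d Set.univ).toReal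

lemma kap_nonneg (d : ℕ) : 0 ≤ kap d := by unfold kap; positivity

lemma sigma_abs (d : ℕ) (v : EuclideanSpace ℝ (Fin (d + 1))) :
    ∫ y, |⟪v, y⟫| ∂sigmaMeasure d = 2 * kap d * ‖v‖ := by
  by_cases hv : v = 0
  · simp [hv]
  have hn : ‖v‖ ≠ 0 := norm_ne_zero_iff.2 hv
  have h1 : ∀ y, |⟪v, y⟫| = ‖v‖ * |⟪‖v‖⁻¹ • v, y⟫| := by
    intro y
    rw [real_inner_smul_left, abs_mul, abs_inv, abs_norm]; field_simp
  simp_rw [h1]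
  rw [integral_const_mul, mul_comm]
  congr 1
  rw [integral_eq_lintegral_of_nonneg_ae (Eventually.of_forall fun _ => abs_nonneg _)
    (by fun_prop), sigma_eq, lintegral_smul_measure, lintegral_surfH d _ (by
      rw [norm_smul, norm_inv, norm_norm, inv_mul_cancel₀ hn])]
  rw [smul_eq_mul, ENNReal.toReal_mul, ENNReal.toReal_mul, ENNReal.toReal_inv, kap]
  simp; ring

lemma sigma_odd (d : ℕ) (v : EuclideanSpace ℝ (Fin (d + 1))) :
    ∫ y, ⟪v, y⟫ ∂sigmaMeasure d = 0 := by
  have h := (sigma_mp d (LinearIsometryEquiv.neg ℝ)).integral_comp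
    (LinearIsometryEquiv.neg ℝ (E := EuclideanSpace ℝ (Fin (d + 1)))).toHomeomorph.measurableEmbedding
    (fun y => ⟪v, y⟫)
  simp only [LinearIsometryEquiv.coe_neg, inner_neg_right, integral_neg] at h
  linarith

lemma sigma_integrable_inner (d : ℕ) (v : EuclideanSpace ℝ (Fin (d + 1))) :
    Integrable (fun y => ⟪v, y⟫) (sigmaMeasure d) := by
  refine Integrable.of_bound (by fun_prop) ‖v‖ ?_
  filter_upwards [sigma_ae d] with y hy
  have := norm_inner_le_norm (𝕜 := ℝ) v y
  rwa [hy, mul_one] at this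

lemma sigma_min (d : ℕ) (v w : EuclideanSpace ℝ (Fin (d + 1))) :
    ∫ y, (1 + min ⟪y, v⟫ ⟪y, w⟫) ∂sigmaMeasure d = 1 - kap d * dist v w := by
  have h1 : ∀ y, 1 + min ⟪y, v⟫ ⟪y, w⟫ = 1 + (1 / 2) * ⟪v + w, y⟫ - (1 / 2) * |⟪v - w, y⟫| := by
    intro y
    rw [inner_add_left, inner_sub_left, real_inner_comm v, real_inner_comm w]
    rcases le_total ⟪v, y⟫ ⟪w, y⟫ with h | h
    · rw [min_eq_left h, abs_of_nonpos (by linarith)]; ring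
    · rw [min_eq_right h, abs_of_nonneg (by linarith)]; ring
  simp_rw [h1]
  have i1 := (sigma_integrable_inner d (v + w)).const_mul (1 / 2)
  have i2 := ((sigma_integrable_inner d (v - w)).abs).const_mul (1 / 2)
  have i0 : Integrable (fun y => 1 + (1 / 2) * ⟪v + w, y⟫) (sigmaMeasure d) :=
    (integrable_const _).add i1
  rw [integral_sub i0 i2, integral_add (integrable_const _) i1,
    integral_const_mul, integral_const_mul, sigma_odd, sigma_abs, dist_eq_norm]
  simp; ring

lemma sigma_dist (d : ℕ) (x x' : EuclideanSpace ℝ (Fin (d + 1))) (hx : ‖x‖ = 1) (hx' : ‖x'‖ = 1) :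
    ∫ z, dist x z ∂sigmaMeasure d = ∫ z, dist x' z ∂sigmaMeasure d := by
  let R := Submodule.reflection (ℝ ∙ (x - x'))ᗮ
  have hR : R x = x' := Submodule.reflection_sub (by rw [hx, hx'])
  have h := (sigma_mp d R).integral_comp R.toHomeomorph.measurableEmbedding (fun z => dist x' z)
  rw [← h]
  simp_rw [← hR, R.dist_map]

/-- cap function -/
def capG (d : ℕ) (ν : Measure (EuclideanSpace ℝ (Fin (d + 1))))
    (q : ℝ × EuclideanSpace ℝ (Fin (d + 1))) : ℝ := (ν {z | q.1 ≤ ⟪q.2, z⟫}).toReal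

lemma capG_measurable (d : ℕ) (ν : Measure (EuclideanSpace ℝ (Fin (d + 1)))) [IsFiniteMeasure ν] :
    Measurable (capG d ν) := by
  have hs : MeasurableSet {p : (ℝ × EuclideanSpace ℝ (Fin (d + 1))) × EuclideanSpace ℝ (Fin (d + 1)) |
      p.1.1 ≤ ⟪p.1.2, p.2⟫} := (isClosed_le (by fun_prop) (by fun_prop)).measurableSet
  exact (measurable_measure_prodMk_left (ν := ν) hs).ennreal_toReal

lemma capG_le (d : ℕ) (ν : Measure (EuclideanSpace ℝ (Fin (d + 1)))) [IsProbabilityMeasure ν]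
    (q) : capG d ν q ∈ Set.Icc (0 : ℝ) 1 :=
  ⟨ENNReal.toReal_nonneg, measureReal_le_one⟩

abbrev qM (d : ℕ) : Measure (ℝ × EuclideanSpace ℝ (Fin (d + 1))) :=
  (volume.restrict (Set.Icc (-1 : ℝ) 1)).prod (sigmaMeasure d)

lemma capG_mul_integrable (d : ℕ) (ν₁ ν₂ : Measure (EuclideanSpace ℝ (Fin (d + 1))))
    [IsProbabilityMeasure ν₁] [IsProbabilityMeasure ν₂] :
    Integrable (fun q => capG d ν₁ q * capG d ν₂ q) (qM d) := by
  refine Integrable.of_bound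
    ((capG_measurable d ν₁).mul (capG_measurable d ν₂)).aestronglyMeasurable 1
    (Eventually.of_forall fun q => ?_)
  have h1 := capG_le d ν₁ q
  have h2 := capG_le d ν₂ q
  rw [Real.norm_of_nonneg (mul_nonneg h1.1 h2.1)]
  exact mul_le_one₀ h1.2 h2.1 h2.2

lemma ae_prod_unit (d : ℕ) (ν₁ ν₂ : Measure (EuclideanSpace ℝ (Fin (d + 1))))
    [IsProbabilityMeasure ν₁] [IsProbabilityMeasure ν₂]
    (h₁ : ∀ᵐ x ∂ν₁, ‖x‖ = 1) (h₂ : ∀ᵐ x ∂ν₂, ‖x‖ = 1) :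
    ∀ᵐ p ∂ν₁.prod ν₂, ‖p.1‖ = 1 ∧ ‖p.2‖ = 1 :=
  (Measure.quasiMeasurePreserving_fst.ae h₁).and (Measure.quasiMeasurePreserving_snd.ae h₂)

lemma dist_integrable (d : ℕ) (ν₁ ν₂ : Measure (EuclideanSpace ℝ (Fin (d + 1))))
    [IsProbabilityMeasure ν₁] [IsProbabilityMeasure ν₂]
    (h₁ : ∀ᵐ x ∂ν₁, ‖x‖ = 1) (h₂ : ∀ᵐ x ∂ν₂, ‖x‖ = 1) :
    Integrable (fun p : EuclideanSpace ℝ (Fin (d + 1)) × EuclideanSpace ℝ (Fin (d + 1)) =>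
      dist p.1 p.2) (ν₁.prod ν₂) := by
  refine Integrable.of_bound (by fun_prop) 2 ?_
  filter_upwards [ae_prod_unit d ν₁ ν₂ h₁ h₂] with p hp
  rw [Real.norm_of_nonneg dist_nonneg, dist_eq_norm]
  refine (norm_sub_le _ _).trans ?_
  rw [hp.1, hp.2]; norm_num

lemma capG_mul_integral (d : ℕ) (ν₁ ν₂ : Measure (EuclideanSpace ℝ (Fin (d + 1))))
    [IsProbabilityMeasure ν₁] [IsProbabilityMeasure ν₂]
    (h₁ : ∀ᵐ x ∂ν₁, ‖x‖ = 1) (h₂ : ∀ᵐ x ∂ν₂, ‖x‖ = 1) :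
    ∫ q, capG d ν₁ q * capG d ν₂ q ∂(qM d) =
      1 - kap d * ∫ p, dist p.1 p.2 ∂(ν₁.prod ν₂) := by
  set A : Set ((ℝ × EuclideanSpace ℝ (Fin (d + 1))) ×
    (EuclideanSpace ℝ (Fin (d + 1)) × EuclideanSpace ℝ (Fin (d + 1)))) :=
    {w | w.1.1 ≤ ⟪w.1.2, w.2.1⟫ ∧ w.1.1 ≤ ⟪w.1.2, w.2.2⟫} with hA
  have c1 : MeasurableSet {w : ((ℝ × EuclideanSpace ℝ (Fin (d + 1))) ×
    (EuclideanSpace ℝ (Fin (d + 1)) × EuclideanSpace ℝ (Fin (d + 1)))) | w.1.1 ≤ ⟪w.1.2, w.2.1⟫} :=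
    (isClosed_le (by fun_prop) (by fun_prop)).measurableSet
  have c2 : MeasurableSet {w : ((ℝ × EuclideanSpace ℝ (Fin (d + 1))) ×
    (EuclideanSpace ℝ (Fin (d + 1)) × EuclideanSpace ℝ (Fin (d + 1)))) | w.1.1 ≤ ⟪w.1.2, w.2.2⟫} :=
    (isClosed_le (by fun_prop) (by fun_prop)).measurableSet
  have hAm : MeasurableSet A := c1.inter c2
  have hAint : Integrable (A.indicator (fun _ => (1 : ℝ))) ((qM d).prod (ν₁.prod ν₂)) :=
    (integrable_const 1).indicator hAm
  have e1 : ∀ q, capG d ν₁ q * capG d ν₂ q =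
      ∫ p, A.indicator (fun _ => (1 : ℝ)) (q, p) ∂(ν₁.prod ν₂) := by
    intro q
    have : (fun p => A.indicator (fun _ => (1 : ℝ)) (q, p)) =
        ({z | q.1 ≤ ⟪q.2, z⟫} ×ˢ {z | q.1 ≤ ⟪q.2, z⟫} : Set _).indicator 1 := by
      ext p; rfl
    rw [this, integral_indicator_one, measureReal_prod_prod]
    · rfl
    · exact ((isClosed_le (by fun_prop) (by fun_prop)).measurableSet).prod
        ((isClosed_le (by fun_prop) (by fun_prop)).measurableSet)
  simp_rw [e1]
  rw [integral_integral_swap (f := fun q p => A.indicator (fun _ => (1 : ℝ)) (q, p)) hAint]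
  have e2 : ∀ᵐ p ∂(ν₁.prod ν₂), ∫ q, A.indicator (fun _ => (1 : ℝ)) (q, p) ∂(qM d) =
      1 - kap d * dist p.1 p.2 := by
    filter_upwards [ae_prod_unit d ν₁ ν₂ h₁ h₂] with p hp
    have hi : Integrable (fun q => A.indicator (fun _ => (1 : ℝ)) (q, p)) (qM d) := by
      have : MeasurableSet ((fun q => (q, p)) ⁻¹' A) := measurable_prodMk_right hAm
      exact (integrable_const (1 : ℝ)).indicator this
    rw [integral_prod_symm _ hi, ← sigma_min]
    refine integral_congr_ae ?_
    filter_upwards [sigma_ae d] with y hy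
    have b1 := abs_real_inner_le_norm y p.1
    have b2 := abs_real_inner_le_norm y p.2
    rw [hy, hp.1, mul_one, abs_le] at b1
    rw [hy, hp.2, mul_one, abs_le] at b2
    have : ∀ t, A.indicator (fun _ => (1 : ℝ)) ((t, y), p) =
        (Set.Iic (min ⟪y, p.1⟫ ⟪y, p.2⟫)).indicator 1 t := by
      intro t
      simp only [Set.indicator, hA, Set.mem_ofPred_eq, Set.mem_Iic, le_min_iff, Pi.one_apply]
    simp_rw [this]
    rw [integral_indicator_one measurableSet_Iic, measureReal_restrict_apply measurableSet_Iic,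
      show Set.Iic (min ⟪y, p.1⟫ ⟪y, p.2⟫) ∩ Set.Icc (-1 : ℝ) 1 =
        Set.Icc (-1) (min ⟪y, p.1⟫ ⟪y, p.2⟫) from ?_, Real.volume_real_Icc_of_le]
    · ring
    · exact le_min b1.1 b2.1
    · ext t
      simp only [Set.mem_inter_iff, Set.mem_Iic, Set.mem_Icc]
      constructor
      · rintro ⟨h, h', -⟩; exact ⟨h', h⟩
      · rintro ⟨h, h'⟩; exact ⟨h', h, h'.trans ((min_le_left _ _).trans b1.2)⟩
  rw [integral_congr_ae e2, integral_sub (integrable_const _)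
    ((dist_integrable d ν₁ ν₂ h₁ h₂).const_mul _), integral_const_mul]
  simp

lemma dist_sigma (d : ℕ) (ν : Measure (EuclideanSpace ℝ (Fin (d + 1))))
    [IsProbabilityMeasure ν] (h : ∀ᵐ x ∂ν, ‖x‖ = 1) :
    ∫ p, dist p.1 p.2 ∂(ν.prod (sigmaMeasure d)) =
      ∫ z, dist (EuclideanSpace.single 0 1) z ∂sigmaMeasure d := by
  rw [integral_prod _ (dist_integrable d _ _ h (sigma_ae d))]
  rw [integral_congr_ae (g := fun _ => ∫ z, dist (EuclideanSpace.single 0 1) z ∂sigmaMeasure d)]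
  · simp
  · filter_upwards [h] with x hx
    exact sigma_dist d _ _ hx (by simp)

def empM (d N : ℕ) (x : Fin N → EuclideanSpace ℝ (Fin (d + 1))) :
    Measure (EuclideanSpace ℝ (Fin (d + 1))) :=
  (N : ℝ≥0∞)⁻¹ • ∑ k, Measure.dirac (x k)

lemma empM_prob (d N : ℕ) (hN : 0 < N) (x : Fin N → EuclideanSpace ℝ (Fin (d + 1))) :
    IsProbabilityMeasure (empM d N x) := by
  constructor
  simp only [empM, Measure.smul_apply, Measure.finsetSum_apply, measure_univ, smul_eq_mul]
  simp only [Finset.sum_const, Finset.card_univ, Fintype.card_fin, nsmul_eq_mul, mul_one]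
  exact ENNReal.inv_mul_cancel (by simpa using hN.ne') (by simp)

lemma integral_empM (d N : ℕ) (x : Fin N → EuclideanSpace ℝ (Fin (d + 1)))
    (f : EuclideanSpace ℝ (Fin (d + 1)) → ℝ) :
    ∫ z, f z ∂empM d N x = (N : ℝ)⁻¹ * ∑ k, f (x k) := by
  rw [empM, integral_smul_measure, integral_finsetSum_measure]
  · simp
  · intro i _
    exact integrable_dirac (by simp)

lemma stolarsky (d N : ℕ) (hN : 0 < N) (x : Fin N → EuclideanSpace ℝ (Fin (d + 1)))
    (hx : ∀ k, x k ∈ sphere (0 : EuclideanSpace ℝ (Fin (d + 1))) 1) :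
    L2DiscSq d N x = kap d * ((∫ p, dist p.1 p.2 ∂(sigmaMeasure d).prod (sigmaMeasure d)) -
      (∑ j, ∑ k, if j ≠ k then dist (x j) (x k) else 0) / (N : ℝ) ^ 2) := by
  have hp := empM_prob d N hN x
  have hae : ∀ᵐ z ∂empM d N x, ‖z‖ = 1 := by
    apply Measure.ae_smul_measure
    rw [ae_finsetSum_measure_iff]
    intro k _
    rw [ae_dirac_iff (measurableSet_eq_fun measurable_norm measurable_const)]
    exact mem_sphere_zero_iff_norm.1 (hx k)
  have e1 : ∀ t y, (Nat.card {k : Fin N // t ≤ ⟪y, x k⟫} : ℝ) / N = capG d (empM d N x) (t, y) := by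
    intro t y
    have hm : MeasurableSet {z : EuclideanSpace ℝ (Fin (d + 1)) | t ≤ ⟪y, z⟫} :=
      (isClosed_le (by fun_prop) (by fun_prop)).measurableSet
    have : capG d (empM d N x) (t, y) =
        ∫ z, {z : EuclideanSpace ℝ (Fin (d + 1)) | t ≤ ⟪y, z⟫}.indicator 1 z ∂empM d N x := by
      rw [integral_indicator_one hm]; rfl
    classical
    rw [this, integral_empM, Nat.card_eq_fintype_card, Fintype.card_subtype, div_eq_inv_mul]
    simp [Set.indicator]
  have e2 : L2DiscSq d N x = ∫ q, (capG d (empM d N x) q - capG d (sigmaMeasure d) q) ^ 2 ∂(qM d) := by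
    rw [integral_prod]
    · simp_rw [L2DiscSq, e1]; rfl
    · refine Integrable.of_bound (((capG_measurable d _).sub
        (capG_measurable d _)).pow_const 2).aestronglyMeasurable 1 (Eventually.of_forall fun q => ?_)
      have h1 := capG_le d (empM d N x) q
      have h2 := capG_le d (sigmaMeasure d) q
      rw [norm_pow, sq_le_one_iff₀ (norm_nonneg _), Real.norm_eq_abs, abs_le]
      constructor <;> linarith [h1.1, h1.2, h2.1, h2.2]
  rw [e2]
  have e3 : ∀ q, (capG d (empM d N x) q - capG d (sigmaMeasure d) q) ^ 2 =
      capG d (empM d N x) q * capG d (empM d N x) q -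
      2 * (capG d (empM d N x) q * capG d (sigmaMeasure d) q) +
      capG d (sigmaMeasure d) q * capG d (sigmaMeasure d) q := by intro q; ring
  simp_rw [e3]
  have i1 := capG_mul_integrable d (empM d N x) (empM d N x)
  have i2 := (capG_mul_integrable d (empM d N x) (sigmaMeasure d)).const_mul 2
  have i3 := capG_mul_integrable d (sigmaMeasure d) (sigmaMeasure d)
  have i12 : Integrable (fun q => capG d (empM d N x) q * capG d (empM d N x) q -
      2 * (capG d (empM d N x) q * capG d (sigmaMeasure d) q)) (qM d) := i1.sub i2
  rw [integral_add i12 i3, integral_sub i1 i2, integral_const_mul,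
    capG_mul_integral d _ _ hae hae, capG_mul_integral d _ _ hae (sigma_ae d),
    capG_mul_integral d _ _ (sigma_ae d) (sigma_ae d), dist_sigma d _ hae,
    dist_sigma d _ (sigma_ae d), integral_prod _ (dist_integrable d _ _ hae hae)]
  have e4 : ∫ a, ∫ b, dist a b ∂empM d N x ∂empM d N x =
      (∑ j, ∑ k, if j ≠ k then dist (x j) (x k) else 0) / (N : ℝ) ^ 2 := by
    rw [integral_empM]
    simp_rw [integral_empM]
    rw [← Finset.mul_sum, ← mul_assoc, div_eq_inv_mul, sq, mul_inv]
    congr 1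
    refine Finset.sum_congr rfl fun j _ => Finset.sum_congr rfl fun k _ => ?_
    split_ifs with h
    · rfl
    · rw [not_not.1 h, dist_self]
  rw [e4]
  ring

lemma cfg_nonempty (d N : ℕ) : Nonempty {x : Fin N → EuclideanSpace ℝ (Fin (d + 1)) //
    ∀ k, x k ∈ sphere (0 : EuclideanSpace ℝ (Fin (d + 1))) 1} :=
  ⟨⟨fun _ => EuclideanSpace.single 0 1, fun _ => by simp⟩⟩

lemma sum_bdd (d N : ℕ) : BddAbove (Set.range fun x : {x : Fin N → EuclideanSpace ℝ (Fin (d + 1)) //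
    ∀ k, x k ∈ sphere (0 : EuclideanSpace ℝ (Fin (d + 1))) 1} =>
    ∑ j, ∑ k, if j ≠ k then dist (x.1 j) (x.1 k) else 0) := by
  refine ⟨∑ _j : Fin N, ∑ _k : Fin N, 2, ?_⟩
  rintro _ ⟨x, rfl⟩
  refine Finset.sum_le_sum fun j _ => Finset.sum_le_sum fun k _ => ?_
  split_ifs
  · rw [dist_eq_norm]
    refine (norm_sub_le _ _).trans ?_
    rw [mem_sphere_zero_iff_norm.1 (x.2 j), mem_sphere_zero_iff_norm.1 (x.2 k)]; norm_num
  · norm_num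

lemma opt_eq (d N : ℕ) (hN : 0 < N) :
    optL2Disc d N = √(kap d * ((∫ p, dist p.1 p.2 ∂(sigmaMeasure d).prod (sigmaMeasure d)) -
      maxSumDist d N / (N : ℝ) ^ 2)) := by
  have := cfg_nonempty d N
  set V := ∫ p, dist p.1 p.2 ∂(sigmaMeasure d).prod (sigmaMeasure d) with hV
  have hanti : Antitone (fun s : ℝ => √(kap d * (V - s / (N : ℝ) ^ 2))) := by
    intro s t hst
    have := kap_nonneg d
    dsimp only
    gcongr
  have hcont : Continuous (fun s : ℝ => √(kap d * (V - s / (N : ℝ) ^ 2))) := by fun_prop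
  have h := hanti.map_ciSup_of_continuousAt hcont.continuousAt (sum_bdd d N)
  rw [maxSumDist]
  refine Eq.trans ?_ h.symm
  rw [optL2Disc]
  refine iInf_congr fun x => ?_
  rw [L2Disc, stolarsky d N hN x.1 x.2]

/-- If the maximal sum of distances on `S^d` satisfies
`E_{−1}(S^d; N) = V·N² − c·N^{1−1/d} + o(N^{1−1/d})`, where `V` is the distance integral
and `c > 0`, then `N^{1/2+1/(2d)} · D_{L2,C}(S^d; N) → sqrt(c · H_d(B^d)/H_d(S^d))`. -/
theorem optL2Disc_tendsto_of_energy_asymptotics (d : ℕ) (hd : 2 ≤ d) (c : ℝ) (hc : 0 < c)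
    (hE : (fun N : ℕ => maxSumDist d N -
        ((∫ p : EuclideanSpace ℝ (Fin (d + 1)) × EuclideanSpace ℝ (Fin (d + 1)),
            dist p.1 p.2 ∂ (sigmaMeasure d).prod (sigmaMeasure d)) * (N : ℝ) ^ 2
          - c * (N : ℝ) ^ ((1 : ℝ) - 1 / d)))
        =o[atTop] fun N : ℕ => (N : ℝ) ^ ((1 : ℝ) - 1 / d)) :
    Tendsto (fun N : ℕ => (N : ℝ) ^ ((1 : ℝ) / 2 + 1 / (2 * d)) * optL2Disc d N) atTop
      (𝓝 (Real.sqrt (c *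
        (μH[(d : ℝ)] (closedBall (0 : EuclideanSpace ℝ (Fin d)) 1)).toReal /
        (μH[(d : ℝ)] (sphere (0 : EuclideanSpace ℝ (Fin (d + 1))) 1)).toReal))) := by
  set V := ∫ p : EuclideanSpace ℝ (Fin (d + 1)) × EuclideanSpace ℝ (Fin (d + 1)),
            dist p.1 p.2 ∂ (sigmaMeasure d).prod (sigmaMeasure d) with hV
  have h0 := hE.tendsto_div_nhds_zero
  have hk : c * (μH[(d : ℝ)] (closedBall (0 : EuclideanSpace ℝ (Fin d)) 1)).toReal /
        (μH[(d : ℝ)] (sphere (0 : EuclideanSpace ℝ (Fin (d + 1))) 1)).toReal =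
      kap d * (c - 0) := by
    rw [kap, surfH_univ, betaH]; ring
  rw [hk]
  have h1 := (((tendsto_const_nhds (x := c)).sub h0).const_mul (kap d)).sqrt
  refine h1.congr' ?_
  filter_upwards [eventually_gt_atTop 0] with N hN
  have hN' : (0 : ℝ) < N := by exact_mod_cast hN
  have hd' : (0 : ℝ) < d := by positivity
  rw [opt_eq d N hN, ← hV]
  have ha : (0 : ℝ) ≤ (N : ℝ) ^ ((1 : ℝ) / 2 + 1 / (2 * d)) := by positivity
  rw [← Real.sqrt_sq ha, ← Real.sqrt_mul (sq_nonneg _)]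
  congr 1
  have p1 : ((N : ℝ) ^ ((1 : ℝ) / 2 + 1 / (2 * d))) ^ 2 * (N : ℝ) ^ ((1 : ℝ) - 1 / d) =
      (N : ℝ) ^ 2 := by
    rw [← Real.rpow_natCast, ← Real.rpow_mul hN'.le, ← Real.rpow_add hN', ← Real.rpow_natCast]
    congr 1
    push_cast
    field_simp
    ring
  have hb : (0 : ℝ) < (N : ℝ) ^ ((1 : ℝ) - 1 / d) := by positivity
  have p2 : ((N : ℝ) ^ ((1 : ℝ) / 2 + 1 / (2 * d))) ^ 2 =
      (N : ℝ) ^ 2 / (N : ℝ) ^ ((1 : ℝ) - 1 / d) := by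
    rw [eq_div_iff hb.ne', p1]
  rw [p2]
  field_simp
  ring
end
end

section
/- For every d ≥ 1 and every real s with −2 < s < d and s ≠ 0, the s-energy of the uniform measure on S^d is given by ∫_{S^d} ∫_{S^d} |x − y|^{−s} dσ_d(x) dσ_d(y) = 2^{d−s−1} · Γ((d+1)/2) · Γ((d−s)/2) / ( √π · Γ(d − s/2) ). -/
open MeasureTheory Metric Real Filter
open scoped BigOperators ENNReal NNReal RealInnerProductSpace Topology

noncomputable section

namespace RieszAux

abbrev E (d : ℕ) := EuclideanSpace ℝ (Fin (d + 1))

lemma lintegral_of_integral {α : Type*} [MeasurableSpace α] {μ : Measure α} {f : α → ℝ} {c : ℝ}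
    (hf : 0 ≤ᵐ[μ] f) (hc : 0 < c) (h : ∫ x, f x ∂μ = c) :
    ∫⁻ x, ENNReal.ofReal (f x) ∂μ = ENNReal.ofReal c := by
  have hi : Integrable f μ := by
    by_contra hn
    rw [integral_undef hn] at h
    exact hc.ne h
  rw [← ofReal_integral_eq_lintegral_ofReal hi hf, h]

lemma gauss_lint (d : ℕ) (u : ℝ) (hu : 0 < u) :
    ∫⁻ z : EuclideanSpace ℝ (Fin d), ENNReal.ofReal (Real.exp (-(‖z‖ ^ 2 / u)))
      = ENNReal.ofReal ((π * u) ^ ((d : ℝ) / 2)) := by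
  apply lintegral_of_integral
  · exact Filter.Eventually.of_forall fun z => (Real.exp_pos _).le
  · positivity
  · have := GaussianFourier.integral_rexp_neg_mul_sq_norm (V := EuclideanSpace ℝ (Fin d))
      (b := u⁻¹) (by positivity)
    rw [finrank_euclideanSpace_fin] at this
    rw [div_inv_eq_mul] at this
    rw [← this]
    congr 1; ext z; congr 1; ring

lemma gamma_lint (a r : ℝ) (ha : 0 < a) (hr : 0 < r) :
    ∫⁻ u in Set.Ioi (0 : ℝ), ENNReal.ofReal (u ^ (a - 1) * Real.exp (-(r * u)))
      = ENNReal.ofReal ((1 / r) ^ a * Real.Gamma a) := by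
  apply lintegral_of_integral
  · filter_upwards [ae_restrict_mem measurableSet_Ioi] with u hu
    have : (0 : ℝ) < u := hu
    simp only [Pi.zero_apply]; positivity
  · have := Real.Gamma_pos_of_pos ha
    positivity
  · exact Real.integral_rpow_mul_exp_neg_mul_Ioi ha hr

/-- radial integral -/
lemma radial_lint (d : ℕ) (b : ℝ) (hb : 0 < (d : ℝ) - b) :
    ∫⁻ y : E d, ENNReal.ofReal (‖y‖ ^ (-b) * (Real.exp (-(2 * ‖y‖)) / ‖y‖))
      = ENNReal.ofReal (2 * √π ^ (d + 1) / Real.Gamma (((d : ℝ) + 1) / 2)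
          * ((1 / 2) ^ ((d : ℝ) - b) * Real.Gamma ((d : ℝ) - b))) := by
  have hG := Real.Gamma_pos_of_pos hb
  have hG2 : 0 < Real.Gamma (((d : ℝ) + 1) / 2) := Real.Gamma_pos_of_pos (by positivity)
  apply lintegral_of_integral
  · exact Filter.Eventually.of_forall fun z => by simp only [Pi.zero_apply]; positivity
  · positivity
  · rw [integral_fun_norm_addHaar volume
      (f := fun r : ℝ => r ^ (-b) * (Real.exp (-(2 * r)) / r))]
    rw [finrank_euclideanSpace_fin, measureReal_def, EuclideanSpace.volume_ball]
    have h1 : ∫ y in Set.Ioi (0 : ℝ), y ^ (d + 1 - 1) • (y ^ (-b) * (Real.exp (-(2 * y)) / y))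
        = (1 / 2) ^ ((d : ℝ) - b) * Real.Gamma ((d : ℝ) - b) := by
      rw [← Real.integral_rpow_mul_exp_neg_mul_Ioi hb (by norm_num : (0 : ℝ) < 2)]
      apply setIntegral_congr_fun measurableSet_Ioi
      intro y hy
      have hy : (0 : ℝ) < y := hy
      simp only [smul_eq_mul, Nat.add_sub_cancel]
      rw [Real.rpow_sub_one hy.ne', sub_eq_add_neg (d : ℝ) b, Real.rpow_add hy, Real.rpow_natCast]
      ring
    rw [h1]
    have h2 : Real.Gamma (((d : ℝ) + 1) / 2 + 1)
        = ((d : ℝ) + 1) / 2 * Real.Gamma (((d : ℝ) + 1) / 2) :=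
      Real.Gamma_add_one (by positivity)
    simp only [Fintype.card_fin, ENNReal.ofReal_one, one_pow, one_mul]
    push_cast
    rw [h2, ENNReal.toReal_ofReal (by positivity)]
    simp only [smul_eq_mul, nsmul_eq_mul]
    push_cast
    field_simp

/-- one-dimensional substitution -/
lemma subst_lint (ρ a : ℝ) (hρ : 0 < ρ) :
    ∫⁻ t : ℝ, ENNReal.ofReal ((√(t ^ 2 + ρ ^ 2) - t) ^ (-a) *
        (Real.exp (-(2 * √(t ^ 2 + ρ ^ 2))) / √(t ^ 2 + ρ ^ 2)))
      = ∫⁻ u in Set.Ioi (0 : ℝ),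
          ENNReal.ofReal (u ^ (-a - 1) * Real.exp (-u)) * ENNReal.ofReal (Real.exp (-(ρ ^ 2 / u))) := by
  set f : ℝ → ℝ := fun u => (ρ ^ 2 / u - u) / 2 with hf
  have himg : f '' Set.Ioi 0 = Set.univ := by
    apply Set.eq_univ_of_forall
    intro t
    have hs : √(t ^ 2 + ρ ^ 2) ^ 2 = t ^ 2 + ρ ^ 2 := Real.sq_sqrt (by positivity)
    have hlt : t < √(t ^ 2 + ρ ^ 2) := by
      apply Real.lt_sqrt_of_sq_lt
      nlinarith
    refine ⟨√(t ^ 2 + ρ ^ 2) - t, by simpa using hlt, ?_⟩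
    have : √(t ^ 2 + ρ ^ 2) - t ≠ 0 := by linarith
    simp only [hf]
    field_simp
    nlinarith
  have hinj : Set.InjOn f (Set.Ioi 0) := by
    intro u hu v hv h
    have hu : 0 < u := hu
    have hv : 0 < v := hv
    simp only [hf] at h
    field_simp at h
    have : (v - u) * (ρ ^ 2 + u * v) = 0 := by linarith
    rcases mul_eq_zero.1 this with h | h
    · linarith
    · nlinarith [mul_pos hu hv]
  have hder : ∀ u ∈ Set.Ioi (0 : ℝ), HasDerivWithinAt f ((-(ρ ^ 2 / u ^ 2) - 1) / 2) (Set.Ioi 0) u := by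
    intro u hu
    have hu : 0 < u := hu
    have := (((hasDerivAt_inv hu.ne').const_mul (ρ ^ 2)).sub (hasDerivAt_id u)).div_const 2
    refine (this.congr_deriv ?_).hasDerivWithinAt
    field_simp
  rw [← setLIntegral_univ, ← himg, lintegral_image_eq_lintegral_abs_deriv_mul measurableSet_Ioi hder hinj]
  apply setLIntegral_congr_fun measurableSet_Ioi
  intro u hu
  have hu : 0 < u := hu
  have hr : √(f u ^ 2 + ρ ^ 2) = (ρ ^ 2 / u + u) / 2 := by
    rw [Real.sqrt_eq_iff_mul_self_eq (by positivity) (by positivity)]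
    simp only [hf]
    field_simp
    ring
  have h1 : (ρ ^ 2 / u + u) / 2 - f u = u := by simp only [hf]; ring
  simp only
  rw [hr, h1, ← ENNReal.ofReal_mul (abs_nonneg _), ← ENNReal.ofReal_mul (by positivity)]
  congr 1
  have h2 : |(-(ρ ^ 2 / u ^ 2) - 1) / 2| = (ρ ^ 2 / u ^ 2 + 1) / 2 := by
    rw [abs_of_neg]
    · ring
    · have : 0 < ρ ^ 2 / u ^ 2 := by positivity
      linarith
  have h3 : Real.exp (-(2 * ((ρ ^ 2 / u + u) / 2))) = Real.exp (-u) * Real.exp (-(ρ ^ 2 / u)) := by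
    rw [← Real.exp_add]; congr 1; ring
  rw [h2, h3, Real.rpow_sub_one hu.ne']
  field_simp

end RieszAux
namespace RieszAux

/-- The Lebesgue-side kernel. -/
def ker (a : ℝ) (d : ℕ) (x y : E d) : ℝ≥0∞ :=
  ENNReal.ofReal ((‖y‖ - ⟪x, y⟫) ^ (-a) * (Real.exp (-(2 * ‖y‖)) / ‖y‖))

lemma measurable_ker (a : ℝ) (d : ℕ) : Measurable (fun p : E d × E d => ker a d p.1 p.2) := by
  unfold ker
  have : Measurable (fun p : E d × E d => ⟪p.1, p.2⟫) := by fun_prop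
  fun_prop

lemma exists_isom {d : ℕ} {x y : E d} (h : ‖x‖ = ‖y‖) : ∃ L : E d ≃ₗᵢ[ℝ] E d, L x = y :=
  ⟨_, Submodule.reflection_sub h⟩

lemma ker_int_e0 (a : ℝ) (d : ℕ) (hd : 1 ≤ d) (ha : 0 < (d : ℝ) / 2 - a) :
    ∫⁻ y : E d, ker a d (EuclideanSpace.single 0 1) y
      = ENNReal.ofReal (π ^ ((d : ℝ) / 2) * Real.Gamma ((d : ℝ) / 2 - a)) := by
  have : Nonempty (Fin d) := ⟨⟨0, hd⟩⟩
  set F : ℝ × (Fin d → ℝ) → ℝ≥0∞ := fun p =>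
    ENNReal.ofReal ((√(p.1 ^ 2 + ‖WithLp.toLp 2 p.2‖ ^ 2) - p.1) ^ (-a) *
        (Real.exp (-(2 * √(p.1 ^ 2 + ‖WithLp.toLp 2 p.2‖ ^ 2))) /
          √(p.1 ^ 2 + ‖WithLp.toLp 2 p.2‖ ^ 2))) with hF
  have hFm : Measurable F := by
    have : Measurable (fun p : ℝ × (Fin d → ℝ) => (WithLp.toLp 2 p.2 : EuclideanSpace ℝ (Fin d))) :=
      (WithLp.measurable_toLp 2 _).comp measurable_snd
    simp only [hF]
    fun_prop
  have mp := (volume_preserving_piFinSuccAbove (fun _ : Fin (d + 1) => ℝ) 0).comp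
    (PiLp.volume_preserving_ofLp (Fin (d + 1)))
  have hk : ∀ y : E d, ker a d (EuclideanSpace.single 0 1) y
      = F ((MeasurableEquiv.piFinSuccAbove (fun _ : Fin (d + 1) => ℝ) 0) (WithLp.ofLp y)) := by
    intro y
    have h0 : ((MeasurableEquiv.piFinSuccAbove (fun _ : Fin (d + 1) => ℝ) 0) (WithLp.ofLp y))
        = (y 0, fun i => y i.succ) := rfl
    have hn : √(y 0 ^ 2 + ‖(WithLp.toLp 2 (fun i : Fin d => y i.succ) :
        EuclideanSpace ℝ (Fin d))‖ ^ 2) = ‖y‖ := by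
      rw [EuclideanSpace.norm_sq_eq, EuclideanSpace.norm_eq, Fin.sum_univ_succ]
      simp
    rw [h0]
    simp only [hF, ker]
    rw [hn]
    simp [EuclideanSpace.inner_single_left]
  calc ∫⁻ y : E d, ker a d (EuclideanSpace.single 0 1) y
      = ∫⁻ p : ℝ × (Fin d → ℝ), F p := by
        rw [← mp.lintegral_comp hFm]
        exact lintegral_congr hk
    _ = ∫⁻ z : Fin d → ℝ, ∫⁻ t : ℝ, F (t, z) := by
        rw [Measure.volume_eq_prod, lintegral_prod_symm _ hFm.aemeasurable]
    _ = ∫⁻ z : EuclideanSpace ℝ (Fin d), ∫⁻ t : ℝ, F (t, WithLp.ofLp z) := by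
        rw [← (PiLp.volume_preserving_ofLp (Fin d)).lintegral_comp]
        exact hFm.lintegral_prod_left
    _ = ∫⁻ z : EuclideanSpace ℝ (Fin d), ∫⁻ u in Set.Ioi (0 : ℝ),
          ENNReal.ofReal (u ^ (-a - 1) * Real.exp (-u)) *
            ENNReal.ofReal (Real.exp (-(‖z‖ ^ 2 / u))) := by
        apply lintegral_congr_ae
        have hz : ∀ᵐ z : EuclideanSpace ℝ (Fin d), z ≠ 0 := by
          simp [ae_iff]
        filter_upwards [hz] with z hz
        exact subst_lint ‖z‖ a (norm_pos_iff.2 hz)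
    _ = ∫⁻ u in Set.Ioi (0 : ℝ), ∫⁻ z : EuclideanSpace ℝ (Fin d),
          ENNReal.ofReal (u ^ (-a - 1) * Real.exp (-u)) *
            ENNReal.ofReal (Real.exp (-(‖z‖ ^ 2 / u))) := by
        apply lintegral_lintegral_swap
        apply Measurable.aemeasurable
        simp only [Function.uncurry_def]
        fun_prop
    _ = ∫⁻ u in Set.Ioi (0 : ℝ), ENNReal.ofReal (π ^ ((d : ℝ) / 2)) *
          ENNReal.ofReal (u ^ (((d : ℝ) / 2 - a) - 1) * Real.exp (-(1 * u))) := by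
        apply setLIntegral_congr_fun measurableSet_Ioi
        intro u hu
        have hu : 0 < u := hu
        simp only
        rw [lintegral_const_mul _ (by fun_prop), gauss_lint d u hu,
          ← ENNReal.ofReal_mul (by positivity), ← ENNReal.ofReal_mul (by positivity),
          Real.mul_rpow (by positivity) hu.le]
        congr 1
        have : (d : ℝ) / 2 - a - 1 = (-a - 1) + (d : ℝ) / 2 := by ring
        rw [this, Real.rpow_add hu, one_mul]
        ring
    _ = _ := by
        rw [lintegral_const_mul _ (by fun_prop), gamma_lint _ _ ha one_pos,
          ← ENNReal.ofReal_mul (by positivity)]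
        simp

lemma ker_int (a : ℝ) (d : ℕ) (hd : 1 ≤ d) (ha : 0 < (d : ℝ) / 2 - a) (x : E d) (hx : ‖x‖ = 1) :
    ∫⁻ y : E d, ker a d x y
      = ENNReal.ofReal (π ^ ((d : ℝ) / 2) * Real.Gamma ((d : ℝ) / 2 - a)) := by
  rw [← ker_int_e0 a d hd ha]
  obtain ⟨L, hL⟩ := exists_isom (x := (EuclideanSpace.single 0 1 : E d)) (y := x) (by simp [hx])
  have hm : Measurable (ker a d x) := by
    unfold ker
    have : Measurable (fun y : E d => ⟪x, y⟫) := by fun_prop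
    fun_prop
  rw [← L.measurePreserving.lintegral_comp hm]
  apply lintegral_congr
  intro y
  simp only [ker]
  rw [← hL, L.inner_map_map, L.norm_map]

/-! ### Hausdorff measure of the sphere -/

lemma sphere_pos (d : ℕ) : 0 < μH[(d : ℝ)] (sphere (0 : E d) 1) := by
  set P : E d → (Fin d → ℝ) := fun x i => x i.succ with hP
  have hL : LipschitzWith 1 P := by
    apply LipschitzWith.of_dist_le_mul
    intro x y
    simp only [NNReal.coe_one, one_mul]
    rw [dist_pi_le_iff dist_nonneg]
    intro i
    exact (dist_le_pi_dist (WithLp.ofLp x) (WithLp.ofLp y) i.succ).trans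
      (by simpa using (PiLp.lipschitzWith_ofLp 2 (fun _ : Fin (d + 1) => ℝ)).dist_le_mul x y)
  have hsub : (WithLp.ofLp '' (ball (0 : EuclideanSpace ℝ (Fin d)) 1)) ⊆ P '' sphere (0 : E d) 1 := by
    rintro _ ⟨z, hz, rfl⟩
    have hz : ‖z‖ < 1 := by simpa using hz
    have hz2 : 0 ≤ 1 - ‖z‖ ^ 2 := by nlinarith [norm_nonneg z]
    refine ⟨WithLp.toLp 2 (Fin.cons (√(1 - ‖z‖ ^ 2)) (WithLp.ofLp z)), ?_, ?_⟩
    · rw [mem_sphere_zero_iff_norm, EuclideanSpace.norm_eq, Fin.sum_univ_succ]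
      simp only [Fin.cons_zero, Fin.cons_succ]
      rw [← EuclideanSpace.norm_sq_eq, Real.norm_eq_abs, sq_abs, Real.sq_sqrt hz2]
      simp
    · ext i
      simp [hP]
  have h1 : 0 < (volume : Measure (Fin d → ℝ)) (WithLp.ofLp '' (ball (0 : EuclideanSpace ℝ (Fin d)) 1)) := by
    have ho : IsOpen (WithLp.ofLp '' (ball (0 : EuclideanSpace ℝ (Fin d)) 1)) :=
      (PiLp.homeomorph 2 (fun _ : Fin d => ℝ)).isOpenMap _ isOpen_ball
    exact ho.measure_pos volume ⟨_, 0, by simp, rfl⟩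
  have h2 := hL.hausdorffMeasure_image_le (d := (d : ℝ)) (by positivity) (sphere (0 : E d) 1)
  have h3 : (μH[(d : ℝ)] : Measure (Fin d → ℝ)) = volume := by
    have := hausdorffMeasure_pi_real (ι := Fin d)
    rwa [Fintype.card_fin] at this
  rw [h3] at h2
  have := (h1.trans_le (measure_mono hsub)).trans_le h2
  simpa using this

lemma sphere_lt_top (d : ℕ) : μH[(d : ℝ)] (sphere (0 : E d) 1) < ∞ := by
  have h3 : (μH[(d : ℝ)] : Measure (Fin d → ℝ)) = volume := by
    have := hausdorffMeasure_pi_real (ι := Fin d)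
    rwa [Fintype.card_fin] at this
  set R : ℝ := d + 1
  set K : Set (Fin d → ℝ) := Set.Icc (fun _ => -R) (fun _ => R)
  -- the chart
  let V : Fin (d + 1) → (Fin d → ℝ) → E d := fun i u => WithLp.toLp 2 (i.insertNth (1 : ℝ) u)
  let f : Fin (d + 1) → ℝ → (Fin d → ℝ) → E d := fun i ε u => (ε * ‖V i u‖⁻¹) • V i u
  have hV0 : ∀ i u, V i u ≠ 0 := by
    intro i u h
    have : (V i u) i = 0 := by rw [h]; rfl
    simp [V] at this
  have hVc : ∀ i, ContDiff ℝ 1 (V i) := by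
    intro i
    rw [contDiff_euclidean]
    intro j
    refine Fin.succAboveCases i ?_ ?_ j
    · simp only [V, Fin.insertNth_apply_same]; exact contDiff_const
    · intro k
      simp only [V, Fin.insertNth_apply_succAbove]; exact contDiff_apply ℝ ℝ k
  have hfc : ∀ i ε, ContDiff ℝ 1 (f i ε) := by
    intro i ε
    exact (contDiff_const.mul (((hVc i).norm ℝ (hV0 i)).inv
      (fun u => norm_ne_zero_iff.2 (hV0 i u)))).smul (hVc i)
  have hfin : ∀ i ε, μH[(d : ℝ)] (f i ε '' K) < ∞ := by
    intro i ε
    obtain ⟨C, hC⟩ := (hfc i ε).contDiffOn.exists_lipschitzOnWith one_ne_zero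
      (convex_Icc _ _) (isCompact_Icc : IsCompact K)
    refine (hC.hausdorffMeasure_image_le (d := (d : ℝ)) (by positivity)).trans_lt ?_
    rw [h3]
    exact ENNReal.mul_lt_top (ENNReal.rpow_lt_top_of_nonneg (by positivity) (by simp))
      (isCompact_Icc : IsCompact K).measure_lt_top
  have hcov : sphere (0 : E d) 1 ⊆ ⋃ i : Fin (d + 1), (f i 1 '' K ∪ f i (-1) '' K) := by
    intro x hx
    have hx : ‖x‖ = 1 := by simpa using hx
    obtain ⟨i, -, hi⟩ := Finset.exists_max_image Finset.univ (fun i => |x i|) Finset.univ_nonempty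
    have hi1 : 1 ≤ R * |x i| ^ 2 := by
      have : (1 : ℝ) = ∑ j, |x j| ^ 2 := by
        have := EuclideanSpace.norm_sq_eq x
        simpa [hx] using this
      calc (1 : ℝ) = ∑ j, |x j| ^ 2 := this
        _ ≤ ∑ j : Fin (d + 1), |x i| ^ 2 :=
          Finset.sum_le_sum fun j hj => pow_le_pow_left₀ (abs_nonneg _) (hi j hj) 2
        _ = R * |x i| ^ 2 := by simp [R]
    have hi0 : x i ≠ 0 := by
      intro h
      rw [h] at hi1
      norm_num at hi1
    set u : Fin d → ℝ := fun k => x (i.succAbove k) / x i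
    have hR : 1 ≤ R := by simp [R]
    have hu : u ∈ K := by
      have : ∀ k, |u k| ≤ R := by
        intro k
        simp only [u, abs_div]
        refine le_trans ?_ hR
        exact div_le_one_of_le₀ (hi _ (Finset.mem_univ _)) (abs_nonneg _)
      exact ⟨fun k => (abs_le.1 (this k)).1, fun k => (abs_le.1 (this k)).2⟩
    have hVx : V i u = (x i)⁻¹ • x := by
      ext j
      refine Fin.succAboveCases i ?_ ?_ j
      · simp [V, hi0]
      · intro k
        simp [V, u, div_eq_inv_mul]
    have hnorm : ‖V i u‖ = |x i|⁻¹ := by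
      rw [hVx, norm_smul, hx]; simp
    rw [Set.mem_iUnion]
    refine ⟨i, ?_⟩
    rcases lt_or_gt_of_ne hi0 with h | h
    · right
      refine ⟨u, hu, ?_⟩
      simp only [f]
      rw [hnorm, hVx, abs_of_neg h, smul_smul]
      have : -1 * (-x i)⁻¹⁻¹ * (x i)⁻¹ = 1 := by field_simp
      rw [this, one_smul]
    · left
      refine ⟨u, hu, ?_⟩
      simp only [f]
      rw [hnorm, hVx, abs_of_pos h, smul_smul]
      have : 1 * (x i)⁻¹⁻¹ * (x i)⁻¹ = 1 := by field_simp
      rw [this, one_smul]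
  refine (measure_mono hcov).trans_lt ?_
  refine (measure_iUnion_le _).trans_lt ?_
  rw [tsum_fintype]
  exact ENNReal.sum_lt_top.2 fun i _ =>
    (measure_union_le _ _).trans_lt (ENNReal.add_lt_top.2 ⟨hfin _ _, hfin _ _⟩)

instance sigma_prob (d : ℕ) : IsProbabilityMeasure (sigmaMeasure d) := by
  constructor
  simp only [sigmaMeasure, Measure.smul_apply, Measure.restrict_apply_univ, smul_eq_mul]
  exact ENNReal.inv_mul_cancel (sphere_pos d).ne' (sphere_lt_top d).ne

lemma sigma_mem (d : ℕ) : ∀ᵐ x ∂(sigmaMeasure d), ‖x‖ = 1 := by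
  unfold sigmaMeasure
  refine Measure.ae_smul_measure ?_ _
  filter_upwards [ae_restrict_mem isClosed_sphere.measurableSet] with x hx
  simpa using hx

lemma sigma_inv (d : ℕ) (L : E d ≃ₗᵢ[ℝ] E d) :
    MeasurePreserving L (sigmaMeasure d) (sigmaMeasure d) := by
  unfold sigmaMeasure
  apply MeasurePreserving.smul_measure
  have h := (L.toIsometryEquiv.measurePreserving_hausdorffMeasure (d : ℝ)).restrict_preimage
    (s := sphere (0 : E d) 1) isClosed_sphere.measurableSet
  have h2 : L.toIsometryEquiv ⁻¹' (sphere (0 : E d) 1) = sphere (0 : E d) 1 := by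
    ext x; simp
  rw [h2] at h
  exact h

/-- sphere potential -/
def pot (a : ℝ) (d : ℕ) (e : E d) : ℝ≥0∞ :=
  ∫⁻ x, ENNReal.ofReal ((1 - ⟪x, e⟫) ^ (-a)) ∂(sigmaMeasure d)

lemma pot_const (a : ℝ) (d : ℕ) (e e' : E d) (h : ‖e‖ = ‖e'‖) : pot a d e = pot a d e' := by
  obtain ⟨L, rfl⟩ := exists_isom h
  unfold pot
  have hm : Measurable fun x : E d => ENNReal.ofReal ((1 - ⟪x, L e⟫) ^ (-a)) := by fun_prop
  rw [← (sigma_inv d L).lintegral_comp hm]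
  simp only [L.inner_map_map]

end RieszAux
namespace RieszAux

lemma ker_sphere (a : ℝ) (d : ℕ) (y : E d) :
    ∫⁻ x, ker a d x y ∂(sigmaMeasure d)
      = ENNReal.ofReal (‖y‖ ^ (-a) * (Real.exp (-(2 * ‖y‖)) / ‖y‖)) *
          pot a d (EuclideanSpace.single 0 1) := by
  by_cases hy : y = 0
  · subst hy
    simp [ker]
  have hy0 : 0 < ‖y‖ := norm_pos_iff.2 hy
  have hn : ‖(‖y‖⁻¹ • y)‖ = 1 := by
    rw [norm_smul, norm_inv, norm_norm, inv_mul_cancel₀ hy0.ne']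
  rw [pot_const a d (EuclideanSpace.single 0 1) (‖y‖⁻¹ • y) (by rw [hn]; simp)]
  unfold pot
  rw [← lintegral_const_mul _ (by fun_prop)]
  apply lintegral_congr_ae
  filter_upwards [sigma_mem d] with x hx
  have hle : ⟪x, ‖y‖⁻¹ • y⟫ ≤ 1 := by
    have := real_inner_le_norm x (‖y‖⁻¹ • y)
    rwa [hx, hn, one_mul] at this
  have heq : ‖y‖ - ⟪x, y⟫ = ‖y‖ * (1 - ⟪x, ‖y‖⁻¹ • y⟫) := by
    rw [real_inner_smul_right]
    field_simp
  unfold ker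
  rw [heq, Real.mul_rpow hy0.le (by linarith), ← ENNReal.ofReal_mul (by positivity)]
  congr 1
  ring

lemma pot_eq (a : ℝ) (d : ℕ) (hd : 1 ≤ d) (ha : 0 < (d : ℝ) / 2 - a) (ha' : 0 < (d : ℝ) - a) :
    ENNReal.ofReal (2 * √π ^ (d + 1) / Real.Gamma (((d : ℝ) + 1) / 2)
          * ((1 / 2) ^ ((d : ℝ) - a) * Real.Gamma ((d : ℝ) - a))) *
        pot a d (EuclideanSpace.single 0 1)
      = ENNReal.ofReal (π ^ ((d : ℝ) / 2) * Real.Gamma ((d : ℝ) / 2 - a)) := by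
  have h1 : ∫⁻ x, ∫⁻ y, ker a d x y ∂volume ∂(sigmaMeasure d)
      = ENNReal.ofReal (π ^ ((d : ℝ) / 2) * Real.Gamma ((d : ℝ) / 2 - a)) := by
    rw [lintegral_congr_ae (g := fun _ =>
      ENNReal.ofReal (π ^ ((d : ℝ) / 2) * Real.Gamma ((d : ℝ) / 2 - a)))]
    · simp
    · filter_upwards [sigma_mem d] with x hx
      exact ker_int a d hd ha x hx
  rw [← h1, lintegral_lintegral_swap (measurable_ker a d).aemeasurable]
  simp only [ker_sphere]
  rw [lintegral_mul_const _ (by fun_prop), radial_lint d a ha']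

lemma energy_lint (s : ℝ) (d : ℕ) :
    ∫⁻ p : E d × E d, ENNReal.ofReal (dist p.1 p.2 ^ (-s)) ∂(sigmaMeasure d).prod (sigmaMeasure d)
      = ENNReal.ofReal (2 ^ (-(s / 2))) * pot (s / 2) d (EuclideanSpace.single 0 1) := by
  rw [lintegral_prod_symm _ (by fun_prop)]
  rw [lintegral_congr_ae (g := fun _ =>
    ENNReal.ofReal (2 ^ (-(s / 2))) * pot (s / 2) d (EuclideanSpace.single 0 1))]
  · simp
  filter_upwards [sigma_mem d] with y hy
  rw [pot_const (s / 2) d (EuclideanSpace.single 0 1) y (by simp [hy])]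
  unfold pot
  rw [← lintegral_const_mul _ (by fun_prop)]
  apply lintegral_congr_ae
  filter_upwards [sigma_mem d] with x hx
  have hle : ⟪x, y⟫ ≤ 1 := by
    have := real_inner_le_norm x y
    rwa [hx, hy, one_mul] at this
  have hd2 : dist x y ^ 2 = 2 * (1 - ⟪x, y⟫) := by
    rw [dist_eq_norm, norm_sub_sq_real, hx, hy]; ring
  rw [← ENNReal.ofReal_mul (by positivity), ← Real.mul_rpow (by norm_num) (by linarith), ← hd2,
    ← Real.rpow_natCast, ← Real.rpow_mul dist_nonneg]
  congr 2
  push_cast; ring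

end RieszAux

/-- For `d ≥ 1` and `−2 < s < d`, `s ≠ 0`, the Riesz `s`-energy of the uniform measure
on `S^d` is `2^{d−s−1} Γ((d+1)/2) Γ((d−s)/2) / (√π Γ(d − s/2))`. -/
theorem riesz_energy_integral_sphere (d : ℕ) (hd : 1 ≤ d) (s : ℝ)
    (hs₁ : -2 < s) (hs₂ : s < d) (hs₀ : s ≠ 0) :
    ∫ p : EuclideanSpace ℝ (Fin (d + 1)) × EuclideanSpace ℝ (Fin (d + 1)),
        dist p.1 p.2 ^ (-s) ∂ (sigmaMeasure d).prod (sigmaMeasure d)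
      = 2 ^ ((d : ℝ) - s - 1) * Real.Gamma (((d : ℝ) + 1) / 2) * Real.Gamma (((d : ℝ) - s) / 2)
          / (Real.sqrt π * Real.Gamma ((d : ℝ) - s / 2)) := by
  have ha : 0 < (d : ℝ) / 2 - s / 2 := by linarith
  have hd' : (1 : ℝ) ≤ d := by exact_mod_cast hd
  have ha' : 0 < (d : ℝ) - s / 2 := by linarith
  have hE := RieszAux.energy_lint s d
  have hP := RieszAux.pot_eq (s / 2) d hd ha ha'
  rw [integral_eq_lintegral_of_nonneg_ae
    (Filter.Eventually.of_forall fun p => Real.rpow_nonneg dist_nonneg _)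
    (Measurable.aestronglyMeasurable (by fun_prop)), hE]
  have hP2 := congrArg ENNReal.toReal hP
  have hG1 := Real.Gamma_pos_of_pos ha
  have hG2 := Real.Gamma_pos_of_pos ha'
  have hG3 : 0 < Real.Gamma (((d : ℝ) + 1) / 2) := Real.Gamma_pos_of_pos (by positivity)
  rw [ENNReal.toReal_mul, ENNReal.toReal_ofReal (by positivity),
    ENNReal.toReal_ofReal (by positivity)] at hP2
  rw [ENNReal.toReal_mul, ENNReal.toReal_ofReal (by positivity)]
  generalize (RieszAux.pot (s / 2) d (EuclideanSpace.single 0 1)).toReal = C at hP2 ⊢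
  have hpi : π ^ ((d : ℝ) / 2) = √π ^ d := by
    rw [Real.sqrt_eq_rpow, ← Real.rpow_natCast, ← Real.rpow_mul Real.pi_pos.le]
    congr 1; ring
  have hdiv : ((d : ℝ) - s) / 2 = (d : ℝ) / 2 - s / 2 := by ring
  have h2a : (1 / 2 : ℝ) ^ ((d : ℝ) - s / 2) = (2 ^ ((d : ℝ) - s / 2))⁻¹ := by
    rw [one_div, Real.inv_rpow (by norm_num)]
  have h2b : (2 : ℝ) ^ ((d : ℝ) - s - 1) = 2 ^ ((d : ℝ) - s / 2) * 2 ^ (-(s / 2)) / 2 := by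
    rw [← Real.rpow_add (by norm_num), Real.rpow_sub_one (by norm_num)]
    congr 2; ring
  rw [hpi, h2a, pow_succ] at hP2
  rw [hdiv, h2b]
  have hsp : 0 < √π := Real.sqrt_pos.2 Real.pi_pos
  have h2p : (0 : ℝ) < 2 ^ ((d : ℝ) - s / 2) := by positivity
  have hG2' := hG2.ne'
  have hG3' := hG3.ne'
  rw [eq_div_iff (by positivity)]
  field_simp at hP2 ⊢
  linear_combination hP2
end
end
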